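/- arXiv:2207.08874 — 5 statements merged into one kernel-verified Lean document; each statement's English description precedes it below -/
import Mathlib

section
/- For every integer k ≥ 2 there exists a constant C > 0 such that for all real x ≥ 1 and all real y with 1 ≤ y ≤ x, the number of k-full integers in the interval (x, x + y] satisfies Q_k(x + y) − Q_k(x) ≤ C · y / log(y + 1). -/
/-- A positive integer `n` is `k`-full if every prime dividing `n` does so to at
least the `k`-th power. -/
def IsKFull (k n : ℕ) : Prop := ∀ p : ℕ, p.Prime → p ∣ n → p ^ k ∣ n

/-!
A square-full number avoids, for every prime `p`, the `p - 1` classes modulo `p ^ 2` that are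
divisible by `p` exactly once. Attach to `p` the function `f_p` on `ℤ/p²ℤ` with mean zero that
equals `-1` on these classes and a constant `h(p)`, about `1/p`, elsewhere; it also has mean square
`h(p)`. By the Chinese remainder theorem the products `f_d = ∏_{p ∣ d} f_p`, for squarefree `d`, are
orthogonal up to boundary terms on any interval. Every one of them takes its constant value
`h(d) = ∏_{p ∣ d} h(p)` at a square-full number, so summing `(∑_{d ≤ R} f_d(n))²` over the interval,
with `S = ∑_{d ≤ R} h(d)`, gives `#E * S² ≤ N * S + O(R⁶)`. Finally `S ≫ log R`, and `R` is taken to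
be `N ^ (1/6)`.
-/

open Finset Function

section Periodic

theorem sum_Ico_add_of_periodic {M : Type*} [AddCommMonoid M] {f : ℕ → M} {P : ℕ}
    (hf : Periodic f P) (m : ℕ) : ∑ n ∈ Ico m (m + P), f n = ∑ n ∈ range P, f n := by
  calc ∑ n ∈ Ico m (m + P), f n = (((Multiset.Ico m (m + P)).map (· % P)).map f).sum := by
        simp only [Multiset.map_map, comp_def, hf.map_mod_nat]
        rfl
    _ = ∑ n ∈ range P, f n := by
        rw [Nat.multiset_Ico_map_mod]
        rfl

theorem sum_Ico_le_of_periodic {f : ℕ → ℝ} {P : ℕ} {μ M : ℝ} (hP : 0 < P) (hf : Periodic f P)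
    (hμ : 0 ≤ μ) (hM : 0 ≤ M) (hsum : ∑ n ∈ range P, f n = P * μ) (hle : ∀ n, f n ≤ M) (m N : ℕ) :
    ∑ n ∈ Ico m (m + N), f n ≤ N * μ + P * M := by
  induction N using Nat.strong_induction_on generalizing m with
  | _ N ih =>
    rcases lt_or_ge N P with hN | hN
    · calc ∑ n ∈ Ico m (m + N), f n ≤ N * M := by
            simpa using sum_le_card_nsmul (Ico m (m + N)) f M fun n _ => hle n
        _ ≤ P * M := by gcongr
        _ ≤ N * μ + P * M := le_add_of_nonneg_left (by positivity)
    · obtain ⟨N, rfl⟩ := Nat.exists_eq_add_of_le hN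
      calc ∑ n ∈ Ico m (m + (P + N)), f n
          = ∑ n ∈ Ico m (m + P), f n + ∑ n ∈ Ico (m + P) (m + P + N), f n := by
            rw [sum_Ico_consecutive f (by omega) (by omega), add_assoc]
        _ ≤ P * μ + (N * μ + P * M) := by
            rw [sum_Ico_add_of_periodic hf, hsum]
            gcongr
            exact ih N (by omega) (m + P)
        _ = (P + N : ℕ) * μ + P * M := by push_cast; ring

theorem sum_range_mul_of_periodic {R : Type*} [NonUnitalNonAssocSemiring R] {a b : ℕ} {u v : ℕ → R}
    (hab : a.Coprime b) (ha : a ≠ 0) (hb : b ≠ 0) (hu : Periodic u a) (hv : Periodic v b) :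
    ∑ n ∈ range (a * b), u n * v n = (∑ n ∈ range a, u n) * ∑ n ∈ range b, v n := by
  rw [sum_mul_sum, ← sum_product']
  refine sum_nbij' (fun n => (n % a, n % b)) (fun r => (Nat.chineseRemainder hab r.1 r.2 : ℕ))
    ?_ ?_ ?_ ?_ ?_
  · intro n _
    simp [Nat.mod_lt, Nat.pos_of_ne_zero, ha, hb]
  · intro r _
    simpa using Nat.chineseRemainder_lt_mul hab r.1 r.2 ha hb
  · intro n hn
    exact (Nat.ModEq.eq_of_lt_of_lt
      (Nat.chineseRemainder_modEq_unique hab (Nat.mod_modEq n a).symm (Nat.mod_modEq n b).symm)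
      (mem_range.1 hn) (Nat.chineseRemainder_lt_mul hab _ _ ha hb)).symm
  · rintro ⟨r, s⟩ hrs
    obtain ⟨hr, hs⟩ := by simpa only [mem_product, mem_range] using hrs
    obtain ⟨hra, hsb⟩ := (Nat.chineseRemainder hab r s).2
    exact Prod.ext (Nat.mod_eq_of_modEq hra hr) (Nat.mod_eq_of_modEq hsb hs)
  · intro n _
    simp only [hu.map_mod_nat, hv.map_mod_nat]

theorem periodic_prod_of_periodic {ι R : Type*} [CommMonoid R] {q : ι → ℕ} {u : ι → ℕ → R}
    {A : Finset ι} (hu : ∀ i ∈ A, Periodic (u i) (q i)) :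
    Periodic (fun n => ∏ i ∈ A, u i n) (∏ i ∈ A, q i) := by
  intro n
  refine prod_congr rfl fun i hi => ?_
  obtain ⟨c, hc⟩ := dvd_prod_of_mem q hi
  rw [hc, mul_comm]
  exact (hu i hi).nat_mul c n

theorem sum_range_prod_of_periodic {ι R : Type*} [CommSemiring R] {q : ι → ℕ} {u : ι → ℕ → R}
    {A : Finset ι} (hA : (A : Set ι).Pairwise (Nat.Coprime on q)) (hq : ∀ i ∈ A, q i ≠ 0)
    (hu : ∀ i ∈ A, Periodic (u i) (q i)) :
    ∑ n ∈ range (∏ i ∈ A, q i), ∏ i ∈ A, u i n = ∏ i ∈ A, ∑ n ∈ range (q i), u i n := by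
  classical
  induction A using Finset.induction_on with
  | empty => simp
  | insert j A hj ih =>
    have hcoprime : ∀ i ∈ A, (q j).Coprime (q i) := fun i hi =>
      hA (mem_insert_self j A) (mem_insert_of_mem hi) (ne_of_mem_of_not_mem hi hj).symm
    rw [forall_mem_insert] at hq hu
    simp only [prod_insert hj]
    rw [sum_range_mul_of_periodic (Nat.Coprime.prod_right hcoprime) hq.1
        (prod_ne_zero_iff.2 hq.2) hu.1 (periodic_prod_of_periodic hu.2),
      ih (hA.mono (coe_subset.2 (subset_insert j A))) hq.2 hu.2]

end Periodic

theorem prod_mul_prod_eq_prod_union {ι M : Type*} [DecidableEq ι] [CommMonoid M] (A B : Finset ι)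
    (f : ι → M) :
    (∏ i ∈ A, f i) * ∏ i ∈ B, f i = ∏ i ∈ A ∪ B, f i * if i ∈ A ∩ B then f i else 1 := by
  rw [prod_mul_distrib, prod_ite_mem, inter_eq_right.2 inter_subset_union, prod_union_inter]

/-- A sieve weight of modulus `q` and density `h`: a function on `ℤ/qℤ`, encoded as a `q`-periodic
function on `ℕ`, with values in `[-1, 1]`, mean zero and mean square `h`. In the large sieve it
takes the value `h` on the residue classes that are not sieved out. -/
structure IsSieveWeight (q : ℕ) (h : ℝ) (f : ℕ → ℝ) : Prop where
  pos : 0 < q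
  periodic : Periodic f q
  abs_le_one : ∀ n, |f n| ≤ 1
  sum_eq_zero : ∑ n ∈ range q, f n = 0
  sum_sq : ∑ n ∈ range q, f n ^ 2 = q * h

theorem isSieveWeight_ite {q : ℕ} {Ω : ℕ → Prop} [DecidablePred Ω] (hq : 0 < q)
    (hΩ : Periodic Ω q) (hcount : 2 * q.count Ω ≤ q) :
    IsSieveWeight q (q.count Ω / (q - q.count Ω))
      (fun n => if Ω n then -1 else q.count Ω / (q - q.count Ω)) := by
  have hq' : (0 : ℝ) < q := mod_cast hq
  have hcount' : 2 * (q.count Ω : ℝ) ≤ q := mod_cast hcount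
  have hpos : (0 : ℝ) < q - q.count Ω := by linarith
  have hsum : ∀ a b : ℝ, ∑ n ∈ range q, (if Ω n then a else b)
      = q.count Ω * a + (q - q.count Ω) * b := by
    intro a b
    have hcard : (#{n ∈ range q | ¬ Ω n} : ℝ) = q - q.count Ω := by
      rw [eq_sub_iff_add_eq', Nat.count_eq_card_filter_range]
      exact_mod_cast (card_filter_add_card_filter_not Ω).trans (card_range q)
    rw [sum_ite, sum_const, sum_const, nsmul_eq_mul, nsmul_eq_mul, hcard,
      Nat.count_eq_card_filter_range]
  refine ⟨hq, fun n => by simp only [hΩ n], fun n => ?_, ?_, ?_⟩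
  · split_ifs
    · simp
    · rw [abs_of_nonneg (by positivity), div_le_one hpos]
      linarith
  · rw [hsum]
    field_simp
    ring
  · simp only [ite_pow]
    rw [hsum]
    field_simp
    ring

theorem IsSieveWeight.density_nonneg {q : ℕ} {h : ℝ} {f : ℕ → ℝ} (hf : IsSieveWeight q h f) :
    0 ≤ h := by
  have hq : (0 : ℝ) < q := mod_cast hf.pos
  exact nonneg_of_mul_nonneg_right (hf.sum_sq ▸ sum_nonneg fun n _ => sq_nonneg (f n)) hq

section LargeSieve

variable {ι : Type*} {q : ι → ℕ} {h : ι → ℝ} {f : ι → ℕ → ℝ} {s : Set ι}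

theorem abs_prod_sieveWeight_le_one {A : Finset ι} (hf : ∀ i ∈ A, IsSieveWeight (q i) (h i) (f i))
    (n : ℕ) : |∏ i ∈ A, f i n| ≤ 1 := by
  rw [abs_prod]
  exact prod_le_one (fun _ _ => abs_nonneg _) fun i hi => (hf i hi).abs_le_one n

theorem sum_range_prod_sieveWeight_mul_prod [DecidableEq ι] (hs : s.Pairwise (Nat.Coprime on q))
    (hf : ∀ i ∈ s, IsSieveWeight (q i) (h i) (f i)) {A B : Finset ι} (hA : ↑A ⊆ s) (hB : ↑B ⊆ s) :
    ∑ n ∈ range (∏ i ∈ A ∪ B, q i), (∏ i ∈ A, f i n) * ∏ i ∈ B, f i n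
      = (∏ i ∈ A ∪ B, q i : ℕ) * if A = B then ∏ i ∈ A, h i else 0 := by
  have hAB : ↑(A ∪ B) ⊆ s := by simp [hA, hB]
  have hper : ∀ i ∈ A ∪ B, Periodic (fun n => f i n * if i ∈ A ∩ B then f i n else 1) (q i) :=
    fun i hi n => by simp only [(hf i (hAB hi)).periodic n]
  simp only [prod_mul_prod_eq_prod_union]
  rw [sum_range_prod_of_periodic (hs.mono hAB) (fun i hi => (hf i (hAB hi)).pos.ne') hper]
  split_ifs with hEq
  · subst hEq
    rw [union_self, inter_self, Nat.cast_prod, ← prod_mul_distrib]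
    refine prod_congr rfl fun i hi => ?_
    simpa only [hi, if_true, ← sq] using (hf i (hA hi)).sum_sq
  · obtain ⟨i, hi, hi'⟩ : ∃ i ∈ A ∪ B, i ∉ A ∩ B := by
      by_contra! hsub
      exact hEq (subset_antisymm
        (fun i hi => (mem_inter.1 (hsub i (mem_union_left _ hi))).2)
        (fun i hi => (mem_inter.1 (hsub i (mem_union_right _ hi))).1))
    rw [mul_zero]
    refine prod_eq_zero hi ?_
    simpa only [hi', if_false, mul_one] using (hf i (hAB hi)).sum_eq_zero

theorem sum_Ico_prod_sieveWeight_mul_prod_le [DecidableEq ι] (hs : s.Pairwise (Nat.Coprime on q))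
    (hf : ∀ i ∈ s, IsSieveWeight (q i) (h i) (f i)) {A B : Finset ι} (hA : ↑A ⊆ s) (hB : ↑B ⊆ s)
    (m N : ℕ) :
    ∑ n ∈ Ico m (m + N), (∏ i ∈ A, f i n) * ∏ i ∈ B, f i n
      ≤ N * (if A = B then ∏ i ∈ A, h i else 0) + (∏ i ∈ A, (q i : ℝ)) * ∏ i ∈ B, (q i : ℝ) := by
  have hAB : ↑(A ∪ B) ⊆ s := by simp [hA, hB]
  have hperiodic : Periodic (fun n => (∏ i ∈ A, f i n) * ∏ i ∈ B, f i n) (∏ i ∈ A ∪ B, q i) := by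
    simp only [prod_mul_prod_eq_prod_union]
    exact periodic_prod_of_periodic fun i hi n => by simp only [(hf i (hAB hi)).periodic n]
  have hle : ∀ n, (∏ i ∈ A, f i n) * ∏ i ∈ B, f i n ≤ 1 := fun n =>
    (le_abs_self _).trans <| abs_mul (∏ i ∈ A, f i n) _ ▸ mul_le_one₀
      (abs_prod_sieveWeight_le_one (fun i hi => hf i (hA hi)) n) (abs_nonneg _)
      (abs_prod_sieveWeight_le_one (fun i hi => hf i (hB hi)) n)
  have hmean : 0 ≤ if A = B then ∏ i ∈ A, h i else 0 := by
    split_ifs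
    · exact prod_nonneg fun i hi => (hf i (hA hi)).density_nonneg
    · rfl
  have hperiod : ∏ i ∈ A ∪ B, q i ≤ (∏ i ∈ A, q i) * ∏ i ∈ B, q i := by
    rw [← prod_union_inter]
    exact Nat.le_mul_of_pos_right _ <|
      prod_pos fun i hi => (hf i (hA (mem_inter.1 hi).1)).pos
  refine (sum_Ico_le_of_periodic (prod_pos fun i hi => (hf i (hAB hi)).pos) hperiodic hmean
    zero_le_one (sum_range_prod_sieveWeight_mul_prod hs hf hA hB) hle m N).trans ?_
  rw [mul_one]
  gcongr
  exact_mod_cast hperiod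

theorem card_mul_sq_sum_prod_density_le (hs : s.Pairwise (Nat.Coprime on q))
    (hf : ∀ i ∈ s, IsSieveWeight (q i) (h i) (f i)) {𝒜 : Finset (Finset ι)}
    (h𝒜 : ∀ A ∈ 𝒜, ↑A ⊆ s) {m N : ℕ} {E : Finset ℕ} (hE : E ⊆ Ico m (m + N))
    (hfE : ∀ n ∈ E, ∀ i ∈ s, f i n = h i) :
    (#E : ℝ) * (∑ A ∈ 𝒜, ∏ i ∈ A, h i) ^ 2
      ≤ N * ∑ A ∈ 𝒜, ∏ i ∈ A, h i + (∑ A ∈ 𝒜, ∏ i ∈ A, (q i : ℝ)) ^ 2 := by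
  classical
  have hconst : ∀ n ∈ E, ∑ A ∈ 𝒜, ∏ i ∈ A, f i n = ∑ A ∈ 𝒜, ∏ i ∈ A, h i := fun n hn =>
    sum_congr rfl fun A hA => prod_congr rfl fun i hi => hfE n hn i (h𝒜 A hA hi)
  calc (#E : ℝ) * (∑ A ∈ 𝒜, ∏ i ∈ A, h i) ^ 2
      = ∑ n ∈ E, (∑ A ∈ 𝒜, ∏ i ∈ A, f i n) ^ 2 := by
        rw [sum_congr rfl fun n hn => congrArg (· ^ 2) (hconst n hn), sum_const, nsmul_eq_mul]
    _ ≤ ∑ n ∈ Ico m (m + N), (∑ A ∈ 𝒜, ∏ i ∈ A, f i n) ^ 2 :=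
        sum_le_sum_of_subset_of_nonneg hE fun _ _ _ => sq_nonneg _
    _ = ∑ A ∈ 𝒜, ∑ B ∈ 𝒜, ∑ n ∈ Ico m (m + N), (∏ i ∈ A, f i n) * ∏ i ∈ B, f i n := by
        simp only [sq, sum_mul_sum]
        rw [sum_comm]
        exact sum_congr rfl fun A _ => sum_comm
    _ ≤ ∑ A ∈ 𝒜, ∑ B ∈ 𝒜, (N * (if A = B then ∏ i ∈ A, h i else 0)
          + (∏ i ∈ A, (q i : ℝ)) * ∏ i ∈ B, (q i : ℝ)) :=
        sum_le_sum fun A hA => sum_le_sum fun B hB =>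
          sum_Ico_prod_sieveWeight_mul_prod_le hs hf (h𝒜 A hA) (h𝒜 B hB) m N
    _ = N * ∑ A ∈ 𝒜, ∏ i ∈ A, h i + (∑ A ∈ 𝒜, ∏ i ∈ A, (q i : ℝ)) ^ 2 := by
        simp only [sum_add_distrib, ← mul_sum, sum_ite_eq, sq, sum_mul_sum]
        rw [sum_congr rfl fun A hA => if_pos hA]

end LargeSieve

section SquarefreeSums

theorem log_add_one_le_two_mul_sum_squarefree_inv (R : ℕ) :
    Real.log (R + 1) ≤ 2 * ∑ d ∈ Icc 1 R with Squarefree d, (d : ℝ)⁻¹ := by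
  have hcover : Icc 1 R ⊆
      image (fun r : ℕ × ℕ => r.2 ^ 2 * r.1) ({d ∈ Icc 1 R | Squarefree d} ×ˢ Ioo 0 (R + 1)) := by
    intro n hn
    obtain ⟨hn, hnR⟩ := mem_Icc.1 hn
    obtain ⟨d, b, hd, hb, rfl, hsq⟩ := Nat.sq_mul_squarefree_of_pos hn
    have hdR : d ≤ b ^ 2 * d := Nat.le_mul_of_pos_left d (by positivity)
    have hbR : b ≤ b ^ 2 * d :=
      (Nat.le_self_pow two_ne_zero b).trans (Nat.le_mul_of_pos_right _ hd)
    refine mem_image.2 ⟨(d, b), ?_, rfl⟩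
    simp only [mem_product, mem_filter, mem_Icc, mem_Ioo]
    exact ⟨⟨⟨hd, hdR.trans hnR⟩, hsq⟩, hb, by omega⟩
  calc Real.log (R + 1) ≤ ∑ n ∈ Icc 1 R, (n : ℝ)⁻¹ := by
        simpa [harmonic_eq_sum_Icc] using log_add_one_le_harmonic R
    _ ≤ ∑ n ∈ image (fun r : ℕ × ℕ => r.2 ^ 2 * r.1)
          ({d ∈ Icc 1 R | Squarefree d} ×ˢ Ioo 0 (R + 1)), (n : ℝ)⁻¹ :=
        sum_le_sum_of_subset_of_nonneg hcover fun _ _ _ => by positivity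
    _ ≤ ∑ r ∈ {d ∈ Icc 1 R | Squarefree d} ×ˢ Ioo 0 (R + 1), ((r.2 ^ 2 * r.1 : ℕ) : ℝ)⁻¹ :=
        sum_image_le_of_nonneg fun _ _ => by positivity
    _ = (∑ b ∈ Ioo 0 (R + 1), ((b : ℝ) ^ 2)⁻¹) * ∑ d ∈ Icc 1 R with Squarefree d, (d : ℝ)⁻¹ := by
        rw [sum_mul_sum, sum_product_right]
        simp only [Nat.cast_mul, Nat.cast_pow, mul_inv]
    _ ≤ 2 * ∑ d ∈ Icc 1 R with Squarefree d, (d : ℝ)⁻¹ := by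
        gcongr
        simpa using sum_Ioo_inv_sq_le (α := ℝ) 0 (R + 1)

theorem prod_Icc_one_add_inv_mul_pred_le {N : ℕ} (hN : 2 ≤ N) :
    ∏ n ∈ Icc 2 N, (1 + ((n : ℝ) * (n - 1))⁻¹) ≤ 3 * (1 - (N : ℝ)⁻¹) := by
  induction N, hN using Nat.le_induction with
  | base => norm_num
  | succ n hn ih =>
    have : (0 : ℝ) < n := by positivity
    rw [prod_Icc_succ_top (by omega)]
    calc _ ≤ 3 * (1 - (n : ℝ)⁻¹) * (1 + (((n + 1 : ℕ) : ℝ) * ((n + 1 : ℕ) - 1))⁻¹) := by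
          gcongr
          push_cast
          rw [add_sub_cancel_right]
          positivity
      _ ≤ 3 * (1 - ((n + 1 : ℕ) : ℝ)⁻¹) := by
          push_cast
          rw [← sub_nonneg]
          have hdiff : 3 * (1 - ((n : ℝ) + 1)⁻¹) - 3 * (1 - (n : ℝ)⁻¹)
              * (1 + (((n : ℝ) + 1) * (n + 1 - 1))⁻¹) = 3 / (n ^ 2 * (n + 1)) := by
            rw [add_sub_cancel_right]
            field_simp
            ring
          rw [hdiff]
          positivity

theorem prod_one_add_inv_mul_pred_le_three {A : Finset ℕ} (hA : ∀ n ∈ A, 2 ≤ n) :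
    ∏ n ∈ A, (1 + ((n : ℝ) * (n - 1))⁻¹) ≤ 3 := by
  have hnonneg : ∀ n : ℕ, 2 ≤ n → 0 ≤ ((n : ℝ) * (n - 1))⁻¹ := fun n hn => by
    have hn' : (2 : ℝ) ≤ n := mod_cast hn
    exact inv_nonneg.2 (mul_nonneg (by linarith) (by linarith))
  set N := max 2 (A.sup id)
  have hsub : A ⊆ Icc 2 N := fun n hn =>
    mem_Icc.2 ⟨hA n hn, (le_sup (f := id) hn).trans (le_max_right _ _)⟩
  calc ∏ n ∈ A, (1 + ((n : ℝ) * (n - 1))⁻¹) ≤ ∏ n ∈ Icc 2 N, (1 + ((n : ℝ) * (n - 1))⁻¹) :=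
        prod_le_prod_of_subset_of_one_le hsub
          (fun n hn => by linarith [hnonneg n (hA n hn)])
          (fun n hn _ => by linarith [hnonneg n (mem_Icc.1 hn).1])
    _ ≤ 3 * (1 - (N : ℝ)⁻¹) := prod_Icc_one_add_inv_mul_pred_le (le_max_left _ _)
    _ ≤ 3 := by linarith [inv_nonneg.2 (Nat.cast_nonneg (α := ℝ) N)]

end SquarefreeSums

section Squarefull

theorem IsKFull.anti {j k n : ℕ} (hjk : j ≤ k) (hn : IsKFull k n) : IsKFull j n :=
  fun p hp hpn => (pow_dvd_pow p hjk).trans (hn p hp hpn)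

theorem periodic_dvd_and_not_sq_dvd (p : ℕ) : Periodic (fun n => p ∣ n ∧ ¬ p ^ 2 ∣ n) (p ^ 2) := by
  intro n
  simp only [Nat.dvd_add_left (dvd_pow_self p two_ne_zero), Nat.dvd_add_left (dvd_refl (p ^ 2))]

theorem count_dvd_and_not_sq_dvd {p : ℕ} (hp : 0 < p) :
    (p ^ 2).count (fun n => p ∣ n ∧ ¬ p ^ 2 ∣ n) = p - 1 := by
  have hsub : {n ∈ Ioc 0 (p ^ 2) | p ^ 2 ∣ n} ⊆ {n ∈ Ioc 0 (p ^ 2) | p ∣ n} :=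
    monotone_filter_right _ fun n _ hn => (dvd_pow_self p two_ne_zero).trans hn
  calc (p ^ 2).count (fun n => p ∣ n ∧ ¬ p ^ 2 ∣ n)
      = #{n ∈ Ioc 0 (p ^ 2) | p ∣ n ∧ ¬ p ^ 2 ∣ n} := by
        rw [← Nat.filter_Ico_card_eq_of_periodic 1 _ _ (periodic_dvd_and_not_sq_dvd p)]
        congr 2
        ext n
        simp only [mem_Ico, mem_Ioc]
        omega
    _ = #{n ∈ Ioc 0 (p ^ 2) | p ∣ n} - #{n ∈ Ioc 0 (p ^ 2) | p ^ 2 ∣ n} := by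
        rw [filter_and_not, card_sdiff_of_subset hsub]
    _ = p - 1 := by
        rw [Nat.Ioc_filter_dvd_card_eq_div, Nat.Ioc_filter_dvd_card_eq_div,
          Nat.div_self (by positivity), sq, Nat.mul_div_cancel _ hp]

/-- The density `h(p) = ω / (p² - ω)` for the `ω = p - 1` residue classes modulo `p²` that a
square-full number avoids. -/
noncomputable def squarefullDensity (p : ℕ) : ℝ := (p - 1) / (p ^ 2 - (p - 1))

/-- The sieve weight modulo `p²` that detects the residue classes divisible by `p` exactly once. -/
noncomputable def squarefullWeight (p n : ℕ) : ℝ :=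
  if p ∣ n ∧ ¬ p ^ 2 ∣ n then -1 else squarefullDensity p

/-- The sum `S(R)` of the densities `∏_{p ∣ d} h(p)` over the squarefree `d ≤ R`: the large sieve
saves a factor `S(R)` over the trivial bound. -/
noncomputable def squarefullSieveSum (R : ℕ) : ℝ :=
  ∑ d ∈ Icc 1 R with Squarefree d, ∏ p ∈ d.primeFactors, squarefullDensity p

theorem isSieveWeight_squarefullWeight {p : ℕ} (hp : 0 < p) :
    IsSieveWeight (p ^ 2) (squarefullDensity p) (squarefullWeight p) := by
  have hcount := count_dvd_and_not_sq_dvd hp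
  have hweight := isSieveWeight_ite (pow_pos hp 2) (periodic_dvd_and_not_sq_dvd p) <| by
    rw [hcount]
    have := Nat.sub_add_cancel hp
    nlinarith
  rw [hcount] at hweight
  simp only [Nat.cast_pred hp, Nat.cast_pow] at hweight
  exact hweight

theorem IsKFull.squarefullWeight_eq {n p : ℕ} (hn : IsKFull 2 n) (hp : p.Prime) :
    squarefullWeight p n = squarefullDensity p :=
  if_neg fun h => h.2 (hn p hp h.1)

theorem squarefullDensity_nonneg {p : ℕ} (hp : 0 < p) : 0 ≤ squarefullDensity p :=
  (isSieveWeight_squarefullWeight hp).density_nonneg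

theorem inv_eq_squarefullDensity_mul {p : ℕ} (hp : 2 ≤ p) :
    (p : ℝ)⁻¹ = squarefullDensity p * (1 + ((p : ℝ) * (p - 1))⁻¹) := by
  have hp' : (2 : ℝ) ≤ p := mod_cast hp
  have hpred : (p : ℝ) - 1 ≠ 0 := by linarith
  have hden : (p : ℝ) ^ 2 - (p - 1) ≠ 0 := by nlinarith
  rw [squarefullDensity]
  field_simp
  ring

theorem prod_squarefullDensity_nonneg (d : ℕ) :
    0 ≤ ∏ p ∈ d.primeFactors, squarefullDensity p :=
  prod_nonneg fun _ hp => squarefullDensity_nonneg (Nat.pos_of_mem_primeFactors hp)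

theorem inv_le_three_mul_prod_squarefullDensity {d : ℕ} (hd : Squarefree d) :
    (d : ℝ)⁻¹ ≤ 3 * ∏ p ∈ d.primeFactors, squarefullDensity p := by
  have htwo : ∀ p ∈ d.primeFactors, 2 ≤ p := fun p hp => (Nat.prime_of_mem_primeFactors hp).two_le
  calc (d : ℝ)⁻¹ = ∏ p ∈ d.primeFactors, (p : ℝ)⁻¹ := by
        conv_lhs => rw [← Nat.prod_primeFactors_of_squarefree hd]
        rw [Nat.cast_prod, prod_inv_distrib]
    _ = (∏ p ∈ d.primeFactors, (1 + ((p : ℝ) * (p - 1))⁻¹))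
          * ∏ p ∈ d.primeFactors, squarefullDensity p := by
        rw [← prod_mul_distrib]
        exact prod_congr rfl fun p hp => (inv_eq_squarefullDensity_mul (htwo p hp)).trans
          (mul_comm _ _)
    _ ≤ 3 * ∏ p ∈ d.primeFactors, squarefullDensity p :=
        mul_le_mul_of_nonneg_right (prod_one_add_inv_mul_pred_le_three htwo)
          (prod_squarefullDensity_nonneg d)

theorem log_add_one_le_six_mul_squarefullSieveSum (R : ℕ) :
    Real.log (R + 1) ≤ 6 * squarefullSieveSum R := by
  calc Real.log (R + 1) ≤ 2 * ∑ d ∈ Icc 1 R with Squarefree d, (d : ℝ)⁻¹ :=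
        log_add_one_le_two_mul_sum_squarefree_inv R
    _ ≤ 2 * (3 * squarefullSieveSum R) := by
        gcongr
        rw [squarefullSieveSum, mul_sum]
        exact sum_le_sum fun d hd => inv_le_three_mul_prod_squarefullDensity (mem_filter.1 hd).2
    _ = 6 * squarefullSieveSum R := by ring

theorem one_le_squarefullSieveSum {R : ℕ} (hR : 1 ≤ R) : 1 ≤ squarefullSieveSum R := by
  have hone : 1 ∈ {d ∈ Icc 1 R | Squarefree d} := by simp [hR]
  simpa [squarefullSieveSum] using single_le_sum
    (f := fun d : ℕ => ∏ p ∈ d.primeFactors, squarefullDensity p)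
    (fun d _ => prod_squarefullDensity_nonneg d) hone

theorem sum_squarefree_prod_sq_le (R : ℕ) :
    ∑ d ∈ Icc 1 R with Squarefree d, ∏ p ∈ d.primeFactors, (p : ℝ) ^ 2 ≤ R ^ 3 := by
  calc ∑ d ∈ Icc 1 R with Squarefree d, ∏ p ∈ d.primeFactors, (p : ℝ) ^ 2
      = ∑ d ∈ Icc 1 R with Squarefree d, (d : ℝ) ^ 2 := sum_congr rfl fun d hd => by
        rw [prod_pow, ← Nat.cast_prod,
          Nat.prod_primeFactors_of_squarefree (mem_filter.1 hd).2]
    _ ≤ ∑ d ∈ Icc 1 R, (d : ℝ) ^ 2 :=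
        sum_le_sum_of_subset_of_nonneg (filter_subset _ _) fun _ _ _ => by positivity
    _ ≤ ∑ _d ∈ Icc 1 R, (R : ℝ) ^ 2 := sum_le_sum fun d hd => by
        gcongr
        exact (mem_Icc.1 hd).2
    _ = R ^ 3 := by
        rw [sum_const, Nat.card_Icc, Nat.add_sub_cancel, nsmul_eq_mul]
        ring

theorem card_squarefull_mul_sq_sieveSum_le {m N : ℕ} {E : Finset ℕ} (hE : E ⊆ Ico m (m + N))
    (hfull : ∀ n ∈ E, IsKFull 2 n) (R : ℕ) :
    (#E : ℝ) * squarefullSieveSum R ^ 2 ≤ N * squarefullSieveSum R + R ^ 6 := by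
  have hcoprime : {p : ℕ | p.Prime}.Pairwise (Nat.Coprime on (· ^ 2)) := fun p hp r hr hpr =>
    ((Nat.coprime_primes hp hr).2 hpr).pow 2 2
  have hinj : Set.InjOn Nat.primeFactors ({d ∈ Icc 1 R | Squarefree d} : Finset ℕ) :=
    Nat.prod_primeFactors_invOn_squarefree.2.injOn.mono fun d hd => (mem_filter.1 hd).2
  have hprime : ∀ A ∈ image Nat.primeFactors {d ∈ Icc 1 R | Squarefree d},
      (A : Set ℕ) ⊆ {p | p.Prime} := by
    simp only [mem_image]
    rintro _ ⟨d, -, rfl⟩ p hp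
    exact Nat.prime_of_mem_primeFactors hp
  have hsieve := card_mul_sq_sum_prod_density_le hcoprime
    (fun p hp => isSieveWeight_squarefullWeight (Nat.Prime.pos hp)) hprime hE
    fun n hn p hp => (hfull n hn).squarefullWeight_eq hp
  rw [sum_image hinj, sum_image hinj] at hsieve
  push_cast at hsieve
  calc (#E : ℝ) * squarefullSieveSum R ^ 2
      ≤ N * squarefullSieveSum R
        + (∑ d ∈ Icc 1 R with Squarefree d, ∏ p ∈ d.primeFactors, (p : ℝ) ^ 2) ^ 2 := hsieve
    _ ≤ N * squarefullSieveSum R + ((R : ℝ) ^ 3) ^ 2 := by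
        gcongr
        exact sum_squarefree_prod_sq_le R
    _ = N * squarefullSieveSum R + R ^ 6 := by ring

theorem card_squarefull_mul_log_le {m N : ℕ} {E : Finset ℕ} (hE : E ⊆ Ico m (m + N))
    (hfull : ∀ n ∈ E, IsKFull 2 n) : (#E : ℝ) * Real.log (N + 1) ≤ 72 * N := by
  rcases Nat.eq_zero_or_pos N with rfl | hN
  · simp
  set R := Nat.nthRoot 6 N
  have hRN : (R : ℝ) ^ 6 ≤ N := mod_cast Nat.pow_nthRoot_le_iff.2 (Or.inl (by norm_num))
  have hNR : (N : ℝ) + 1 ≤ (R + 1) ^ 6 := mod_cast Nat.lt_pow_nthRoot_add_one (by norm_num) N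
  have hS : 1 ≤ squarefullSieveSum R :=
    one_le_squarefullSieveSum <|
      (Nat.le_nthRoot_iff (by norm_num)).2 (by simpa using Nat.succ_le_of_lt hN)
  have hlog : Real.log (N + 1) ≤ 36 * squarefullSieveSum R := by
    calc Real.log (N + 1) ≤ Real.log ((R + 1) ^ 6) := Real.log_le_log (by positivity) hNR
      _ = 6 * Real.log (R + 1) := by rw [Real.log_pow]; norm_num
      _ ≤ 36 * squarefullSieveSum R := by linarith [log_add_one_le_six_mul_squarefullSieveSum R]
  have hcard : (#E : ℝ) * squarefullSieveSum R ≤ 2 * N := by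
    refine le_of_mul_le_mul_right ?_ (zero_lt_one.trans_le hS)
    calc (#E : ℝ) * squarefullSieveSum R * squarefullSieveSum R
        = #E * squarefullSieveSum R ^ 2 := by ring
      _ ≤ N * squarefullSieveSum R + R ^ 6 := card_squarefull_mul_sq_sieveSum_le hE hfull R
      _ ≤ N * squarefullSieveSum R + N * squarefullSieveSum R := by
          gcongr
          exact hRN.trans (le_mul_of_one_le_right (by positivity) hS)
      _ = 2 * N * squarefullSieveSum R := by ring
  calc (#E : ℝ) * Real.log (N + 1) ≤ #E * (36 * squarefullSieveSum R) := by gcongr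
    _ = 36 * (#E * squarefullSieveSum R) := by ring
    _ ≤ 72 * N := by linarith

end Squarefull

theorem setOf_lt_and_le_add_subset_Ico (x y : ℝ) :
    {n : ℕ | x < n ∧ n ≤ x + y ∧ 0 < n} ⊆ Ico (⌊x⌋₊ + 1) (⌊x⌋₊ + 1 + ⌈y⌉₊) := by
  rintro n ⟨hxn, hny, hn⟩
  have hle : (n : ℝ) < (⌊x⌋₊ + 1 + ⌈y⌉₊ : ℕ) := by
    push_cast
    linarith [Nat.lt_floor_add_one x, Nat.le_ceil y]
  exact mem_coe.2 (mem_Ico.2 ⟨(Nat.floor_lt' hn.ne').2 hxn, mod_cast hle⟩)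

theorem kfull_short_interval_bound_general {k : ℕ} (hk : 2 ≤ k) (x : ℝ) {y : ℝ} (hy : 0 < y) :
    ({n : ℕ | x < (n : ℝ) ∧ (n : ℝ) ≤ x + y ∧ 0 < n ∧ IsKFull k n}.ncard : ℝ)
      ≤ 144 * y / Real.log (y + 1) := by
  classical
  set E := {n ∈ Ico (⌊x⌋₊ + 1) (⌊x⌋₊ + 1 + ⌈y⌉₊) | IsKFull k n}
  have hncard : {n : ℕ | x < (n : ℝ) ∧ (n : ℝ) ≤ x + y ∧ 0 < n ∧ IsKFull k n}.ncard ≤ #E := by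
    rw [← Set.ncard_coe_finset]
    refine Set.ncard_le_ncard ?_ E.finite_toSet
    rintro n ⟨hxn, hny, hn, hfull⟩
    exact mem_coe.2 (mem_filter.2 ⟨setOf_lt_and_le_add_subset_Ico x y ⟨hxn, hny, hn⟩, hfull⟩)
  have hcard : #E ≤ ⌈y⌉₊ := (card_filter_le _ _).trans (by simp)
  have hlog : 0 < Real.log (y + 1) := Real.log_pos (by linarith)
  rw [le_div_iff₀ hlog]
  refine (mul_le_mul_of_nonneg_right (Nat.cast_le.2 hncard) hlog.le).trans ?_
  rcases le_total y 1 with hy1 | hy1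
  · have hE : (#E : ℝ) ≤ 1 := mod_cast hcard.trans (Nat.ceil_le.2 (mod_cast hy1))
    calc (#E : ℝ) * Real.log (y + 1) ≤ 1 * y := by
          gcongr
          linarith [Real.log_le_sub_one_of_pos (show 0 < y + 1 by linarith)]
      _ ≤ 144 * y := by linarith
  · calc (#E : ℝ) * Real.log (y + 1) ≤ #E * Real.log (⌈y⌉₊ + 1) := by
          gcongr
          exact Nat.le_ceil y
      _ ≤ 72 * ⌈y⌉₊ := card_squarefull_mul_log_le (filter_subset _ _)
          fun n hn => (mem_filter.1 hn).2.anti hk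
      _ ≤ 144 * y := by linarith [Nat.ceil_lt_add_one hy.le]

/-- For every integer `k ≥ 2` there is a constant `C > 0` such that for all real
`x ≥ 1` and `1 ≤ y ≤ x`, the number of `k`-full integers in `(x, x + y]` is at
most `C · y / log (y + 1)`. -/
theorem kfull_short_interval_bound (k : ℕ) (hk : 2 ≤ k) :
    ∃ C : ℝ, 0 < C ∧ ∀ x y : ℝ, 1 ≤ x → 1 ≤ y → y ≤ x →
      (({n : ℕ | x < (n : ℝ) ∧ (n : ℝ) ≤ x + y ∧ 0 < n ∧ IsKFull k n}.ncard : ℝ))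
        ≤ C * y / Real.log (y + 1) :=
  ⟨144, by norm_num, fun x _ _ hy _ =>
    kfull_short_interval_bound_general hk x (zero_lt_one.trans_le hy)⟩
end

section
/- For every real α with 0 < α < 1 there exists a constant C = C(α) > 0 such that for all real x ≥ 1, all real y with 1 ≤ y ≤ x, and all integers q, r with q ≥ 1, gcd(r, q) = 1 and q ≤ y^{1−α}, the number of squarefull integers n with x < n ≤ x + y and n ≡ r (mod q) is at most C · y / (φ(q) · log(y + 1)). -/
/-- A positive integer `n` is squarefull if every prime dividing `n` does so to at
least the second power. -/
def IsSquarefull (n : ℕ) : Prop := ∀ p : ℕ, p.Prime → p ∣ n → p ^ 2 ∣ n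

open Finset

/-! The dual form of the large sieve. A squarefull number avoids, for every prime `p`, the `p - 1`
classes modulo `p ^ 2` that `p` divides exactly. Give these classes one common weight, and all
others the weight `1`, so that the resulting function `h_p` has mean zero modulo `p ^ 2`. For
squarefree `d` coprime to `q`, the products `H_d = ∏ h_p` over `p ∣ d` equal `1` at every squarefull
number and are almost orthogonal along the progression `c + q * k`, `k < K`, with mean square
`≪ d`. Comparing `|A| (∑ 1/d) ^ 2` with `∑_{k < K} (∑ H_d(c + q * k) / d) ^ 2`, where `d ≤ z` and
`A` is the set of `k < K` at which `c + q * k` is squarefull, gives `|A| ∑ 1/d ≪ K + z ^ 9`.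
Since every `n ≤ z` is `m * b ^ 2 * d` with `m` composed of primes dividing `q`, the sum `∑ 1/d` is
`≫ (φ(q) / q) log z`; take `z` about `(y / q) ^ (1/9)`. -/

/-! ### Sums of periodic functions -/

theorem sum_range_eq_sum_zmod {R : Type*} [AddCommMonoid R] (M : ℕ) [NeZero M] (f : ℕ → R) :
    ∑ k ∈ range M, f k = ∑ a : ZMod M, f a.val := by
  cases M with
  | zero => exact absurd rfl (NeZero.ne 0)
  | succ m => exact (Fin.sum_univ_eq_sum_range f (m + 1)).symm

theorem sum_range_affine_of_periodic {R : Type*} [AddCommMonoid R] {M q : ℕ} {f : ℕ → R}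
    (hf : Function.Periodic f M) (hq : q.Coprime M) (c : ℕ) :
    ∑ k ∈ range M, f (c + q * k) = ∑ k ∈ range M, f k := by
  obtain rfl | hM := eq_or_ne M 0
  · simp
  have : NeZero M := ⟨hM⟩
  have cast_val (a : ZMod M) : f (c + q * a.val) = f (c + q * a : ZMod M).val := by
    have : (c + q * a : ZMod M) = (c + q * a.val : ℕ) := by simp
    rw [this, ZMod.val_natCast, hf.map_mod_nat]
  have bijective : Function.Bijective fun a : ZMod M ↦ (c + q * a : ZMod M) :=
    Finite.injective_iff_bijective.1 <|
      (add_right_injective _).comp ((ZMod.isUnit_iff_coprime q M).2 hq).mul_right_injective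
  rw [sum_range_eq_sum_zmod M f, sum_range_eq_sum_zmod M fun k ↦ f (c + q * k)]
  simp_rw [cast_val]
  exact bijective.sum_comp fun a ↦ f a.val

theorem sum_range_mul_eq_sum_sum {R : Type*} [AddCommMonoid R] (A B : ℕ) (f : ℕ → R) :
    ∑ k ∈ range (A * B), f k = ∑ i ∈ range A, ∑ j ∈ range B, f (i + A * j) := by
  rw [sum_comm]
  induction B with
  | zero => simp
  | succ B ih =>
    rw [Nat.mul_succ, sum_range_add, ih, sum_range_succ]
    simp_rw [add_comm]

theorem sum_range_mul_of_periodic_of_coprime {R : Type*} [NonUnitalNonAssocSemiring R] {A B : ℕ}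
    {f g : ℕ → R} (hf : Function.Periodic f A) (hg : Function.Periodic g B) (hAB : A.Coprime B) :
    ∑ k ∈ range (A * B), f k * g k = (∑ k ∈ range A, f k) * ∑ k ∈ range B, g k := by
  rw [sum_range_mul_eq_sum_sum, sum_mul]
  refine sum_congr rfl fun i _ ↦ ?_
  rw [← sum_range_affine_of_periodic hg hAB i, mul_sum]
  refine sum_congr rfl fun j _ ↦ ?_
  rw [mul_comm A j, ← smul_eq_mul j A, hf.nsmul j i]

theorem periodic_prod_of_periodic_s1 {ι R : Type*} [CommMonoid R] {s : Finset ι} {m : ι → ℕ}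
    {f : ι → ℕ → R} (hf : ∀ i ∈ s, Function.Periodic (f i) (m i)) :
    Function.Periodic (fun n ↦ ∏ i ∈ s, f i n) (∏ i ∈ s, m i) := by
  refine fun n ↦ prod_congr rfl fun i hi ↦ ?_
  obtain ⟨t, ht⟩ := dvd_prod_of_mem m hi
  rw [ht, mul_comm, ← smul_eq_mul, (hf i hi).nsmul t n]

theorem sum_range_prod_of_periodic_s1 {ι R : Type*} [CommSemiring R] {s : Finset ι} {m : ι → ℕ}
    {f : ι → ℕ → R} (hm : (s : Set ι).Pairwise (Function.onFun Nat.Coprime m))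
    (hf : ∀ i ∈ s, Function.Periodic (f i) (m i)) :
    ∑ k ∈ range (∏ i ∈ s, m i), ∏ i ∈ s, f i k = ∏ i ∈ s, ∑ k ∈ range (m i), f i k := by
  classical
  induction s using Finset.induction_on with
  | empty => simp
  | insert a s ha ih =>
    have hf' : ∀ i ∈ s, Function.Periodic (f i) (m i) := fun i hi ↦ hf i (mem_insert_of_mem hi)
    have coprime : (m a).Coprime (∏ i ∈ s, m i) :=
      Nat.Coprime.prod_right fun i hi ↦
        hm (mem_insert_self a s) (mem_insert_of_mem hi) (ne_of_mem_of_not_mem hi ha).symm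
    simp_rw [prod_insert ha]
    rw [sum_range_mul_of_periodic_of_coprime (hf a (mem_insert_self a s))
      (periodic_prod_of_periodic_s1 hf') coprime,
      ih (hm.mono (coe_subset.2 (subset_insert a s))) hf']

theorem norm_sum_range_sub_smul_sum_period_le {E : Type*} [SeminormedAddCommGroup E]
    [NormedSpace ℝ E] {M : ℕ} (hM : 0 < M) {f : ℕ → E} (hf : Function.Periodic f M) {B : ℝ}
    (hB : ∀ n, ‖f n‖ ≤ B) (K : ℕ) :
    ‖∑ k ∈ range K, f k - (K / M : ℝ) • ∑ k ∈ range M, f k‖ ≤ 2 * (M * B) := by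
  have norm_sum_le (N : ℕ) : ‖∑ k ∈ range N, f k‖ ≤ N * B := by
    simpa using norm_sum_le_of_le (range N) fun k _ ↦ hB k
  have hM' : (0 : ℝ) < M := by exact_mod_cast hM
  have hB0 : 0 ≤ B := (norm_nonneg _).trans (hB 0)
  induction K using Nat.strong_induction_on with
  | _ K ih =>
    obtain hK | hK := lt_or_ge K M
    · have hK' : (K : ℝ) ≤ M := by exact_mod_cast hK.le
      calc ‖∑ k ∈ range K, f k - (K / M : ℝ) • ∑ k ∈ range M, f k‖
          ≤ K * B + K / M * (M * B) := by
            refine (norm_sub_le _ _).trans (add_le_add (norm_sum_le K) ?_)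
            rw [norm_smul, Real.norm_of_nonneg (by positivity)]
            gcongr
            exact norm_sum_le M
        _ = 2 * (K * B) := by field_simp; ring
        _ ≤ 2 * (M * B) := by gcongr
    · obtain ⟨L, rfl⟩ := Nat.exists_eq_add_of_le hK
      have shift (k : ℕ) : f (M + k) = f k := by rw [add_comm, hf]
      convert ih L (by omega) using 2
      rw [sum_range_add]
      simp_rw [shift]
      push_cast
      rw [add_div, div_self hM'.ne', add_smul, one_smul]
      abel

theorem norm_sum_range_affine_sub_smul_sum_period_le {E : Type*} [SeminormedAddCommGroup E]
    [NormedSpace ℝ E] {M q : ℕ} (hM : 0 < M) {f : ℕ → E} (hf : Function.Periodic f M)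
    (hq : q.Coprime M) {B : ℝ} (hB : ∀ n, ‖f n‖ ≤ B) (K c : ℕ) :
    ‖∑ k ∈ range K, f (c + q * k) - (K / M : ℝ) • ∑ k ∈ range M, f k‖ ≤ 2 * (M * B) := by
  have affine_periodic : Function.Periodic (fun k ↦ f (c + q * k)) M := fun k ↦ by
    simpa only [mul_add, add_assoc, smul_eq_mul] using hf.nsmul q (c + q * k)
  rw [← sum_range_affine_of_periodic hf hq c]
  exact norm_sum_range_sub_smul_sum_period_le hM affine_periodic (fun k ↦ hB (c + q * k)) K

theorem card_mul_sum_le_of_almost_orthogonal {ι κ : Type*} [DecidableEq ι] {D : Finset ι}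
    {A T : Finset κ} (hAT : A ⊆ T) {w : ι → ℝ} (hw : ∀ d ∈ D, 0 < w d) {H : ι → κ → ℝ}
    (hH : ∀ d ∈ D, ∀ k ∈ A, H d k = 1) {X R : ℝ} (hX : 0 ≤ X)
    (horth : ∀ d ∈ D, ∀ e ∈ D, ∑ k ∈ T, H d k * H e k ≤ (if d = e then X / w d else 0) + R) :
    #A * ∑ d ∈ D, w d ≤ X + R * ∑ d ∈ D, w d := by
  obtain rfl | hD := D.eq_empty_or_nonempty
  · simpa
  have weights_pos : 0 < ∑ d ∈ D, w d := sum_pos hw hD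
  have term_le {d e : ι} (hd : d ∈ D) (he : e ∈ D) :
      w d * w e * ∑ k ∈ T, H d k * H e k ≤ (if d = e then X * w e else 0) + R * (w d * w e) := by
    have hwd := hw d hd
    have hwe := hw e he
    refine (mul_le_mul_of_nonneg_left (horth d hd e he) (by positivity)).trans_eq ?_
    split_ifs with h
    · subst h
      field_simp
    · ring
  refine le_of_mul_le_mul_right ?_ weights_pos
  -- Compare the second moment of `∑ d ∈ D, w d * H d k` over `A` with the one over `T`.
  calc #A * (∑ d ∈ D, w d) * ∑ d ∈ D, w d = ∑ k ∈ A, (∑ d ∈ D, w d * H d k) ^ 2 := by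
        rw [mul_assoc, ← sq, ← nsmul_eq_mul, ← sum_const]
        refine sum_congr rfl fun k hk ↦ congrArg (· ^ 2) (sum_congr rfl fun d hd ↦ ?_)
        rw [hH d hd k hk, mul_one]
    _ ≤ ∑ k ∈ T, (∑ d ∈ D, w d * H d k) ^ 2 :=
        sum_le_sum_of_subset_of_nonneg hAT fun _ _ _ ↦ sq_nonneg _
    _ = ∑ d ∈ D, ∑ e ∈ D, w d * w e * ∑ k ∈ T, H d k * H e k := by
        simp_rw [sq, sum_mul_sum, mul_sum, sum_comm (s := T), mul_mul_mul_comm]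
    _ ≤ ∑ d ∈ D, ∑ e ∈ D, ((if d = e then X * w e else 0) + R * (w d * w e)) :=
        sum_le_sum fun d hd ↦ sum_le_sum fun e he ↦ term_le hd he
    _ = (X + R * ∑ d ∈ D, w d) * ∑ d ∈ D, w d := by
        simp_rw [sum_add_distrib, ← mul_sum, sum_ite_eq, ← sum_mul]
        rw [sum_ite_mem, inter_self, ← mul_sum]
        ring

/-! ### Sieve weights -/

theorem card_filter_range_sq_dvd_not_sq_dvd (p : ℕ) :
    #{k ∈ range (p ^ 2) | p ∣ k ∧ ¬ p ^ 2 ∣ k} = p - 1 := by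
  obtain rfl | hp := p.eq_zero_or_pos
  · simp
  have multiples : {k ∈ range (p ^ 2) | p ∣ k ∧ ¬ p ^ 2 ∣ k} = (Ico 1 p).image (p * ·) := by
    ext k
    simp only [mem_filter, mem_range, mem_image, mem_Ico, sq]
    constructor
    · rintro ⟨hk, ⟨j, rfl⟩, hj⟩
      refine ⟨j, ⟨Nat.pos_of_ne_zero ?_, lt_of_mul_lt_mul_left hk p.zero_le⟩, rfl⟩
      rintro rfl
      simp at hj
    · rintro ⟨j, ⟨hj, hjp⟩, rfl⟩
      refine ⟨Nat.mul_lt_mul_of_pos_left hjp hp, Dvd.intro _ rfl, fun h ↦ ?_⟩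
      exact Nat.not_dvd_of_pos_of_lt hj hjp (Nat.dvd_of_mul_dvd_mul_left hp h)
  rw [multiples, card_image_of_injective _ (mul_right_injective₀ hp.ne'), Nat.card_Ico]

/-- The sieve weight `h_p(n)` at a prime `p`. It equals `1` unless `p` exactly divides `n`, and its
value on the classes that squarefull numbers avoid is chosen so that its mean modulo `p ^ 2` is
zero. -/
noncomputable def localWeight (p n : ℕ) : ℝ :=
  if p ∣ n ∧ ¬ p ^ 2 ∣ n then 1 - p ^ 2 / (p - 1) else 1

theorem localWeight_periodic (p : ℕ) : Function.Periodic (localWeight p) (p ^ 2) := by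
  intro n
  simp only [localWeight, ← Nat.dvd_add_iff_left (dvd_pow_self p two_ne_zero),
    ← Nat.dvd_add_iff_left (dvd_refl (p ^ 2))]

theorem sum_range_localWeight_pow {p : ℕ} (hp : p ≠ 0) (j : ℕ) :
    ∑ k ∈ range (p ^ 2), localWeight p k ^ j =
      (p - 1) * (1 - p ^ 2 / (p - 1)) ^ j + (p ^ 2 - (p - 1)) := by
  have weight_pow (k : ℕ) : localWeight p k ^ j =
      1 + if p ∣ k ∧ ¬ p ^ 2 ∣ k then (1 - p ^ 2 / (p - 1) : ℝ) ^ j - 1 else 0 := by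
    unfold localWeight
    split_ifs <;> simp
  simp_rw [weight_pow, sum_add_distrib, ← sum_filter, sum_const,
    card_filter_range_sq_dvd_not_sq_dvd, card_range, nsmul_eq_mul]
  push_cast [Nat.one_le_iff_ne_zero.2 hp]
  ring

theorem sum_range_localWeight {p : ℕ} (hp : 1 < p) : ∑ k ∈ range (p ^ 2), localWeight p k = 0 := by
  have : (p : ℝ) - 1 ≠ 0 := sub_ne_zero.2 (by exact_mod_cast hp.ne')
  have h := sum_range_localWeight_pow (p := p) (by omega) 1
  simp only [pow_one] at h
  rw [h]
  field_simp
  ring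

theorem sum_range_localWeight_sq {p : ℕ} (hp : 1 < p) :
    ∑ k ∈ range (p ^ 2), localWeight p k ^ 2 = p ^ 2 * (p * (1 + 1 / (p * (p - 1)))) := by
  have : (p : ℝ) - 1 ≠ 0 := sub_ne_zero.2 (by exact_mod_cast hp.ne')
  rw [sum_range_localWeight_pow (by omega) 2]
  field_simp
  ring

theorem abs_localWeight_le {p : ℕ} (hp : 1 < p) (n : ℕ) : |localWeight p n| ≤ (p : ℝ) ^ 2 := by
  have hp' : (2 : ℝ) ≤ p := by exact_mod_cast hp
  have one_le_sq : 1 ≤ (p : ℝ) ^ 2 := one_le_pow₀ (by linarith)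
  have quotient_le : (p : ℝ) ^ 2 / (p - 1) ≤ p ^ 2 := div_le_self (by positivity) (by linarith)
  have quotient_nonneg : 0 ≤ (p : ℝ) ^ 2 / (p - 1) := div_nonneg (by positivity) (by linarith)
  unfold localWeight
  rw [abs_le]
  split_ifs <;> constructor <;> linarith

theorem prod_one_add_one_div_mul_sub_one_le {s : Finset ℕ} (hs : ∀ p ∈ s, 1 < p) :
    ∏ p ∈ s, (1 + 1 / (p * (p - 1)) : ℝ) ≤ Real.exp 1 := by
  have term_nonneg (p : ℕ) : (0 : ℝ) ≤ 1 / (p * (p - 1)) := by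
    obtain rfl | hp := p.eq_zero_or_pos
    · simp
    · have : (0 : ℝ) ≤ p - 1 := sub_nonneg.2 (by exact_mod_cast hp)
      positivity
  have telescope (N : ℕ) : ∑ p ∈ Ico 2 (N + 2), (1 / (p * (p - 1)) : ℝ) ≤ 1 := by
    have term (i : ℕ) :
        (1 / ((2 + i : ℕ) * ((2 + i : ℕ) - 1)) : ℝ) = 1 / (i + 1) - 1 / ((i + 1 : ℕ) + 1) := by
      have : (2 + i - 1 : ℝ) ≠ 0 := by ring_nf; positivity
      push_cast
      field_simp
      ring
    rw [sum_Ico_eq_sum_range, Nat.add_sub_cancel, sum_congr rfl fun i _ ↦ term i,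
      sum_range_sub' fun i : ℕ ↦ (1 / (i + 1) : ℝ)]
    simp only [CharP.cast_eq_zero, zero_add, div_one]
    exact sub_le_self _ (by positivity)
  have subset_Ico : s ⊆ Ico 2 (s.sup id + 2) := fun p hp ↦
    mem_Ico.2 ⟨hs p hp, Nat.lt_add_of_pos_right two_pos |>.trans_le' (le_sup (f := id) hp)⟩
  calc ∏ p ∈ s, (1 + 1 / (p * (p - 1)) : ℝ) ≤ ∏ p ∈ s, Real.exp (1 / (p * (p - 1))) := by
        refine prod_le_prod (fun p _ ↦ add_nonneg zero_le_one (term_nonneg p)) fun p _ ↦ ?_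
        rw [add_comm]
        exact Real.add_one_le_exp _
    _ = Real.exp (∑ p ∈ s, 1 / (p * (p - 1))) := (Real.exp_sum _ _).symm
    _ ≤ Real.exp 1 := Real.exp_le_exp.2 <|
        (sum_le_sum_of_subset_of_nonneg subset_Ico fun p _ _ ↦ term_nonneg p).trans (telescope _)

/-- The sieve weight `H_d(n) = ∏ h_p(n)` over the primes `p ∣ d`. -/
noncomputable def sieveWeight (d n : ℕ) : ℝ :=
  ∏ p ∈ d.primeFactors, localWeight p n

theorem sieveWeight_of_isSquarefull (d : ℕ) {n : ℕ} (hn : IsSquarefull n) :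
    sieveWeight d n = 1 :=
  prod_eq_one fun p hp ↦ if_neg fun h ↦ h.2 (hn p (Nat.prime_of_mem_primeFactors hp) h.1)

theorem abs_sieveWeight_le {d : ℕ} (hd : d ≠ 0) (n : ℕ) : |sieveWeight d n| ≤ (d : ℝ) ^ 2 := by
  rw [sieveWeight, abs_prod]
  calc ∏ p ∈ d.primeFactors, |localWeight p n| ≤ ∏ p ∈ d.primeFactors, (p : ℝ) ^ 2 :=
        prod_le_prod (fun _ _ ↦ abs_nonneg _)
          fun p hp ↦ abs_localWeight_le (Nat.prime_of_mem_primeFactors hp).one_lt n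
    _ = ((∏ p ∈ d.primeFactors, p : ℕ) : ℝ) ^ 2 := by rw [prod_pow, Nat.cast_prod]
    _ ≤ (d : ℝ) ^ 2 := by
        gcongr
        exact Nat.le_of_dvd (Nat.pos_of_ne_zero hd) (Nat.prod_primeFactors_dvd d)

theorem sieveWeight_mul_sieveWeight {d e : ℕ} (hd : d ≠ 0) (he : e ≠ 0) (n : ℕ) :
    sieveWeight d n * sieveWeight e n =
      ∏ p ∈ (d * e).primeFactors, localWeight p n ^ (if p ∣ d.gcd e then 2 else 1) := by
  have mem_inter (p : ℕ) (hp : p ∈ d.primeFactors ∪ e.primeFactors) :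
      p ∣ d.gcd e ↔ p ∈ d.primeFactors ∩ e.primeFactors := by
    rw [← Nat.primeFactors_gcd hd he, Nat.mem_primeFactors]
    rw [← Nat.primeFactors_mul hd he] at hp
    exact ⟨fun h ↦ ⟨Nat.prime_of_mem_primeFactors hp, h, Nat.gcd_ne_zero_left hd⟩, fun h ↦ h.2.1⟩
  rw [Nat.primeFactors_mul hd he, sieveWeight, sieveWeight, ← prod_union_inter,
    ← inter_eq_right.2 (inter_subset_union (s := d.primeFactors) (t := e.primeFactors)),
    ← prod_ite_mem, ← prod_mul_distrib]
  refine prod_congr rfl fun p hp ↦ ?_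
  simp only [mem_inter p hp]
  split_ifs
  · rw [sq]
  · rw [mul_one, pow_one]

/-- A common period of `sieveWeight d` and `sieveWeight e`. -/
def jointPeriod (d e : ℕ) : ℕ :=
  ∏ p ∈ (d * e).primeFactors, p ^ 2

theorem jointPeriod_dvd (d e : ℕ) : jointPeriod d e ∣ (d * e) ^ 2 := by
  rw [jointPeriod, prod_pow]
  exact pow_dvd_pow_of_dvd (Nat.prod_primeFactors_dvd _) 2

theorem sieveWeight_mul_sieveWeight_periodic {d e : ℕ} (hd : d ≠ 0) (he : e ≠ 0) :
    Function.Periodic (fun n ↦ sieveWeight d n * sieveWeight e n) (jointPeriod d e) := by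
  simp_rw [sieveWeight_mul_sieveWeight hd he]
  exact periodic_prod_of_periodic_s1 (f := fun p k ↦ localWeight p k ^ _)
    fun p _ ↦ (localWeight_periodic p).comp (· ^ _)

theorem sum_range_sieveWeight_mul_sieveWeight {d e : ℕ} (hd : d ≠ 0) (he : e ≠ 0) :
    ∑ k ∈ range (jointPeriod d e), sieveWeight d k * sieveWeight e k =
      ∏ p ∈ (d * e).primeFactors,
        ∑ k ∈ range (p ^ 2), localWeight p k ^ (if p ∣ d.gcd e then 2 else 1) := by
  simp_rw [sieveWeight_mul_sieveWeight hd he]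
  refine sum_range_prod_of_periodic_s1 (f := fun p k ↦ localWeight p k ^ _)
    (fun p hp p' hp' hne ↦ ?_) fun p _ ↦ (localWeight_periodic p).comp (· ^ _)
  exact Nat.Coprime.pow 2 2 <| (Nat.coprime_primes (Nat.prime_of_mem_primeFactors hp)
    (Nat.prime_of_mem_primeFactors hp')).2 hne

theorem sum_range_sieveWeight_mul_sieveWeight_of_ne {d e : ℕ} (hd : Squarefree d)
    (he : Squarefree e) (hde : d ≠ e) :
    ∑ k ∈ range (jointPeriod d e), sieveWeight d k * sieveWeight e k = 0 := by
  obtain ⟨p, hp, hpde⟩ : ∃ p, p.Prime ∧ ¬ (p ∣ d ↔ p ∣ e) := by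
    by_contra! h
    exact hde ((Nat.Squarefree.ext_iff hd he).2 h)
  have mem_primeFactors : p ∈ (d * e).primeFactors := by
    rw [Nat.mem_primeFactors, hp.dvd_mul]
    exact ⟨hp, by tauto, mul_ne_zero hd.ne_zero he.ne_zero⟩
  rw [sum_range_sieveWeight_mul_sieveWeight hd.ne_zero he.ne_zero]
  refine prod_eq_zero mem_primeFactors ?_
  have : ¬ p ∣ d.gcd e := by rw [Nat.dvd_gcd_iff]; tauto
  simpa only [if_neg this, pow_one] using sum_range_localWeight hp.one_lt

theorem sum_range_sieveWeight_mul_self_le {d : ℕ} (hd : Squarefree d) :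
    ∑ k ∈ range (jointPeriod d d), sieveWeight d k * sieveWeight d k ≤
      jointPeriod d d * (d * Real.exp 1) := by
  have one_lt {p : ℕ} (hp : p ∈ d.primeFactors) : 1 < p := (Nat.prime_of_mem_primeFactors hp).one_lt
  have primeFactors_eq : (d * d).primeFactors = d.primeFactors := by
    rw [Nat.primeFactors_mul hd.ne_zero hd.ne_zero, union_self]
  have prod_eq : ∏ p ∈ d.primeFactors, (p : ℝ) = d := by
    rw [← Nat.cast_prod, Nat.prod_primeFactors_of_squarefree hd]
  have local_sum (p : ℕ) (hp : p ∈ d.primeFactors) :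
      ∑ k ∈ range (p ^ 2), localWeight p k ^ (if p ∣ d.gcd d then 2 else 1) =
        p ^ 2 * (p * (1 + 1 / (p * (p - 1)))) := by
    rw [Nat.gcd_self, if_pos (Nat.dvd_of_mem_primeFactors hp), sum_range_localWeight_sq (one_lt hp)]
  rw [sum_range_sieveWeight_mul_sieveWeight hd.ne_zero hd.ne_zero, jointPeriod, primeFactors_eq,
    prod_congr rfl local_sum, prod_mul_distrib, prod_mul_distrib, prod_eq]
  push_cast
  gcongr
  exact prod_one_add_one_div_mul_sub_one_le fun p hp ↦ one_lt hp

theorem sum_range_sieveWeight_affine_le {q z d e : ℕ} (hd : Squarefree d) (he : Squarefree e)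
    (hdq : d.Coprime q) (heq : e.Coprime q) (hdz : d ≤ z) (hez : e ≤ z) (K c : ℕ) :
    ∑ k ∈ range K, sieveWeight d (c + q * k) * sieveWeight e (c + q * k) ≤
      (if d = e then K * (d * Real.exp 1) else 0) + 2 * (z : ℝ) ^ 8 := by
  have hd0 := hd.ne_zero
  have he0 := he.ne_zero
  set M := jointPeriod d e with hM
  have M_dvd : M ∣ (d * e) ^ 2 := jointPeriod_dvd d e
  have M_pos : 0 < M := Nat.pos_of_dvd_of_pos M_dvd (by positivity)
  have coprime : q.Coprime M :=
    ((hdq.symm.mul_right heq.symm).pow_right 2).coprime_dvd_right M_dvd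
  have norm_weights_le (n : ℕ) : ‖sieveWeight d n * sieveWeight e n‖ ≤ (d : ℝ) ^ 2 * e ^ 2 := by
    rw [Real.norm_eq_abs, abs_mul]
    exact mul_le_mul (abs_sieveWeight_le hd0 n) (abs_sieveWeight_le he0 n)
      (abs_nonneg _) (by positivity)
  have main_term : (K / M : ℝ) * ∑ k ∈ range M, sieveWeight d k * sieveWeight e k ≤
      if d = e then K * (d * Real.exp 1) else 0 := by
    split_ifs with hde
    · subst hde
      calc (K / M : ℝ) * ∑ k ∈ range M, sieveWeight d k * sieveWeight d k
          ≤ K / M * (M * (d * Real.exp 1)) := by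
            gcongr
            exact sum_range_sieveWeight_mul_self_le hd
        _ = K * (d * Real.exp 1) := by field_simp
    · rw [hM, sum_range_sieveWeight_mul_sieveWeight_of_ne hd he hde, mul_zero]
  have error_term : 2 * (M * ((d : ℝ) ^ 2 * e ^ 2)) ≤ 2 * (z : ℝ) ^ 8 := calc
    2 * (M * ((d : ℝ) ^ 2 * e ^ 2)) ≤ 2 * (((d : ℝ) * e) ^ 2 * ((d : ℝ) ^ 2 * e ^ 2)) := by
      gcongr
      exact_mod_cast Nat.le_of_dvd (by positivity) M_dvd
    _ ≤ 2 * (((z : ℝ) * z) ^ 2 * ((z : ℝ) ^ 2 * z ^ 2)) := by gcongr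
    _ = 2 * (z : ℝ) ^ 8 := by ring
  have equidistribution := (le_abs_self _).trans <| norm_sum_range_affine_sub_smul_sum_period_le
    M_pos (sieveWeight_mul_sieveWeight_periodic hd0 he0) coprime norm_weights_le K c
  rw [smul_eq_mul] at equidistribution
  linarith

/-! ### Sums of reciprocals -/

theorem exists_mem_factoredNumbers_mul_coprime {q n : ℕ} (hq : q ≠ 0) (hn : n ≠ 0) :
    ∃ m ∈ Nat.factoredNumbers q.primeFactors, ∃ e, e.Coprime q ∧ m * e = n := by
  induction n using induction_on_primes with
  | zero => contradiction
  | one => exact ⟨1, by simp [Nat.mem_factoredNumbers], 1, Nat.coprime_one_left q, rfl⟩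
  | prime_mul p a hp ih =>
    obtain ⟨m, hm, e, he, rfl⟩ := ih (right_ne_zero_of_mul hn)
    by_cases hpq : p ∣ q
    · refine ⟨p * m, Nat.mul_mem_factoredNumbers ?_ hm, e, he, mul_assoc p m e⟩
      exact Nat.mem_factoredNumbers_of_primeFactors_subset hp.ne_zero <|
        Nat.primeFactors_mono hpq hq
    · exact ⟨m, hm, p * e, ((hp.coprime_iff_not_dvd).2 hpq).mul_left he, by ring⟩

theorem sum_le_sum_mul_sum_of_subset_image₂ {α β γ R : Type*} [DecidableEq γ] [CommSemiring R]
    [PartialOrder R] [IsOrderedRing R] {s : Finset α} {t : Finset β} {r : Finset γ} {g : α → β → γ}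
    (hr : r ⊆ image₂ g s t) {f : γ → R} (hf : ∀ c ∈ image₂ g s t, 0 ≤ f c) {u : α → R} {v : β → R}
    (hfg : ∀ a ∈ s, ∀ b ∈ t, f (g a b) = u a * v b) :
    ∑ c ∈ r, f c ≤ (∑ a ∈ s, u a) * ∑ b ∈ t, v b := by
  calc ∑ c ∈ r, f c ≤ ∑ c ∈ image₂ g s t, f c :=
        sum_le_sum_of_subset_of_nonneg hr fun c hc _ ↦ hf c hc
    _ ≤ ∑ ab ∈ s ×ˢ t, f (g ab.1 ab.2) := sum_image_le_of_nonneg hf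
    _ = (∑ a ∈ s, u a) * ∑ b ∈ t, v b := by
        rw [sum_mul_sum, sum_product]
        exact sum_congr rfl fun a ha ↦ sum_congr rfl fun b hb ↦ hfg a ha b hb

theorem prod_primeFactors_one_sub_inv_inv {q : ℕ} (hq : q ≠ 0) :
    ∏ p ∈ q.primeFactors, (1 - (p : ℝ)⁻¹)⁻¹ = q / q.totient := by
  have totient_eq : (q.totient : ℝ) = q * ∏ p ∈ q.primeFactors, (1 - (p : ℝ)⁻¹) := by
    simpa using congrArg (Rat.cast (K := ℝ)) (Nat.totient_eq_mul_prod_factors q)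
  rw [totient_eq, prod_inv_distrib, div_mul_cancel_left₀ (by exact_mod_cast hq)]

theorem sum_inv_le_div_totient {q : ℕ} (hq : q ≠ 0) {T : Finset ℕ}
    (hT : ∀ m ∈ T, m ∈ Nat.factoredNumbers q.primeFactors) :
    ∑ m ∈ T, (m : ℝ)⁻¹ ≤ q / q.totient := by
  let f : ℕ →*₀ ℝ := invMonoidWithZeroHom.comp (Nat.castRingHom ℝ).toMonoidWithZeroHom
  have norm_lt_one {p : ℕ} (hp : p.Prime) : ‖f p‖ < 1 := by
    change ‖(p : ℝ)⁻¹‖ < 1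
    simpa using inv_lt_one_of_one_lt₀ (Nat.one_lt_cast (α := ℝ).2 hp.one_lt)
  have euler_product :=
    (EulerProduct.summable_and_hasSum_factoredNumbers_prod_filter_prime_geometric
      (f := (f : ℕ →* ℝ)) norm_lt_one q.primeFactors).2
  rw [filter_true_of_mem fun p hp ↦ Nat.prime_of_mem_primeFactors hp] at euler_product
  rw [← prod_primeFactors_one_sub_inv_inv hq, ← sum_subtype_of_mem _ hT]
  exact sum_le_hasSum _ (fun m _ ↦ inv_nonneg.2 (Nat.cast_nonneg m.1)) euler_product

theorem sum_Icc_inv_sq_le_two (z : ℕ) : ∑ k ∈ Icc 1 z, ((k : ℝ) ^ 2)⁻¹ ≤ 2 := by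
  have h := sum_Ioo_inv_sq_le (α := ℝ) 0 (z + 1)
  rw [show Ioo 0 (z + 1) = Icc 1 z from rfl] at h
  simpa using h

theorem log_add_one_le_sum_inv (z : ℕ) : Real.log (z + 1) ≤ ∑ n ∈ Icc 1 z, (n : ℝ)⁻¹ := by
  have h := log_add_one_le_harmonic z
  rw [harmonic_eq_sum_Icc] at h
  push_cast at h
  exact h

/-- The squarefree numbers `1 ≤ d ≤ z` coprime to `q`, the index set of the sieve. -/
def coprimeSquarefrees (q z : ℕ) : Finset ℕ :=
  {d ∈ Icc 1 z | Squarefree d ∧ d.Coprime q}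

theorem Icc_subset_image₂_factoredNumbers {q : ℕ} (hq : q ≠ 0) (z : ℕ) :
    Icc 1 z ⊆ image₂ (· * ·) {m ∈ Icc 1 z | m ∈ Nat.factoredNumbers q.primeFactors}
      (image₂ (fun b d ↦ b ^ 2 * d) (Icc 1 z) (coprimeSquarefrees q z)) := by
  intro n hn
  obtain ⟨hn0, hnz⟩ := mem_Icc.1 hn
  obtain ⟨m, hm, e, heq, rfl⟩ := exists_mem_factoredNumbers_mul_coprime hq (Nat.ne_of_gt hn0)
  obtain ⟨d, b, rfl, hd⟩ := Nat.sq_mul_squarefree e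
  have mem_Icc_of_dvd {k : ℕ} (hk : k ∣ m * (b ^ 2 * d)) : k ∈ Icc 1 z :=
    mem_Icc.2 ⟨Nat.pos_of_dvd_of_pos hk hn0, (Nat.le_of_dvd hn0 hk).trans hnz⟩
  have hde : d ∣ b ^ 2 * d := dvd_mul_left d _
  have hbe : b ∣ b ^ 2 * d := (dvd_pow_self b two_ne_zero).mul_right d
  refine mem_image₂_of_mem (mem_filter.2 ⟨mem_Icc_of_dvd (dvd_mul_right m _), hm⟩) ?_
  exact mem_image₂_of_mem (mem_Icc_of_dvd (hbe.mul_left m)) <|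
    mem_filter.2 ⟨mem_Icc_of_dvd (hde.mul_left m), hd, heq.coprime_dvd_left hde⟩

theorem log_add_one_le_sum_inv_coprimeSquarefrees {q : ℕ} (hq : q ≠ 0) (z : ℕ) :
    Real.log (z + 1) ≤ q / q.totient * (2 * ∑ d ∈ coprimeSquarefrees q z, (d : ℝ)⁻¹) := by
  let T : Finset ℕ := {m ∈ Icc 1 z | m ∈ Nat.factoredNumbers q.primeFactors}
  let D := coprimeSquarefrees q z
  let E : Finset ℕ := image₂ (fun b d ↦ b ^ 2 * d) (Icc 1 z) D
  calc Real.log (z + 1) ≤ ∑ n ∈ Icc 1 z, (n : ℝ)⁻¹ := log_add_one_le_sum_inv z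
    _ ≤ (∑ m ∈ T, (m : ℝ)⁻¹) * ∑ e ∈ E, (e : ℝ)⁻¹ :=
        sum_le_sum_mul_sum_of_subset_image₂ (Icc_subset_image₂_factoredNumbers hq z)
          (fun _ _ ↦ by positivity) fun m _ e _ ↦ by rw [Nat.cast_mul, mul_inv]
    _ ≤ q / q.totient * ((∑ b ∈ Icc 1 z, ((b : ℝ) ^ 2)⁻¹) * ∑ d ∈ D, (d : ℝ)⁻¹) := by
        gcongr
        · exact sum_inv_le_div_totient hq fun m hm ↦ (mem_filter.1 hm).2
        · exact sum_le_sum_mul_sum_of_subset_image₂ subset_rfl (fun _ _ ↦ by positivity)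
            fun b _ d _ ↦ by rw [Nat.cast_mul, mul_inv, Nat.cast_pow]
    _ ≤ q / q.totient * (2 * ∑ d ∈ D, (d : ℝ)⁻¹) := by
        gcongr
        exact sum_Icc_inv_sq_le_two z

theorem sum_inv_coprimeSquarefrees_le (q z : ℕ) :
    ∑ d ∈ coprimeSquarefrees q z, (d : ℝ)⁻¹ ≤ z := by
  have inv_le_one (d : ℕ) (_ : d ∈ coprimeSquarefrees q z) : (d : ℝ)⁻¹ ≤ 1 := Nat.cast_inv_le_one d
  refine (sum_le_card_nsmul _ _ 1 inv_le_one).trans ?_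
  rw [nsmul_eq_mul, mul_one]
  simpa [coprimeSquarefrees] using card_filter_le (Icc 1 z) fun d ↦ Squarefree d ∧ d.Coprime q

/-! ### The sieve bound -/

theorem card_mul_sum_inv_coprimeSquarefrees_le {q z K c : ℕ} {A : Finset ℕ} (hA : A ⊆ range K)
    (hsf : ∀ k ∈ A, IsSquarefull (c + q * k)) :
    #A * ∑ d ∈ coprimeSquarefrees q z, (d : ℝ)⁻¹ ≤ Real.exp 1 * K + 2 * (z : ℝ) ^ 9 := by
  calc #A * ∑ d ∈ coprimeSquarefrees q z, (d : ℝ)⁻¹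
      ≤ Real.exp 1 * K + 2 * (z : ℝ) ^ 8 * ∑ d ∈ coprimeSquarefrees q z, (d : ℝ)⁻¹ := by
        refine card_mul_sum_le_of_almost_orthogonal hA (fun d hd ↦ ?_)
          (H := fun d k ↦ sieveWeight d (c + q * k))
          (fun d _ k hk ↦ sieveWeight_of_isSquarefull d (hsf k hk)) (by positivity)
          fun d hd e he ↦ ?_
        · have := (mem_Icc.1 (mem_filter.1 hd).1).1
          positivity
        · obtain ⟨hd, hd', hdq⟩ := mem_filter.1 hd
          obtain ⟨he, he', heq⟩ := mem_filter.1 he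
          convert sum_range_sieveWeight_affine_le hd' he' hdq heq (mem_Icc.1 hd).2 (mem_Icc.1 he).2
            K c using 3
          rw [div_inv_eq_mul]
          ring
    _ ≤ Real.exp 1 * K + 2 * (z : ℝ) ^ 8 * z := by
        gcongr
        exact sum_inv_coprimeSquarefrees_le q z
    _ = Real.exp 1 * K + 2 * (z : ℝ) ^ 9 := by ring

theorem exists_subset_range_ncard_le_card_of_modEq {E : Set ℕ} {x y : ℝ} {q : ℕ} {r : ℤ}
    (hq : 0 < q) (hE : ∀ n ∈ E, x < n ∧ (n : ℝ) ≤ x + y)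
    (hr : ∀ n ∈ E, n ≡ r [ZMOD q]) :
    ∃ c, ∃ A ⊆ range (⌊y / q⌋₊ + 1), (∀ k ∈ A, c + q * k ∈ E) ∧ E.ncard ≤ #A := by
  classical
  obtain rfl | hne := E.eq_empty_or_nonempty
  · exact ⟨0, ∅, by simp⟩
  set c := sInf E
  have hc : c ∈ E := Nat.sInf_mem hne
  refine ⟨c, {k ∈ range (⌊y / q⌋₊ + 1) | c + q * k ∈ E}, filter_subset _ _,
    fun k hk ↦ (mem_filter.1 hk).2, ?_⟩
  have subset_image :
      E ⊆ ({k ∈ range (⌊y / q⌋₊ + 1) | c + q * k ∈ E}.image (c + q * ·) : Finset ℕ) := by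
    intro n hn
    have modEq : c ≡ n [MOD q] := Int.natCast_modEq_iff.1 ((hr c hc).trans (hr n hn).symm)
    obtain ⟨k, hk⟩ := (Nat.modEq_iff_dvd' (Nat.sInf_le hn)).1 modEq
    obtain rfl : n = c + q * k := by have : c ≤ n := Nat.sInf_le hn; omega
    have hk_le : k ≤ ⌊y / q⌋₊ := by
      refine Nat.le_floor ((le_div_iff₀ (by exact_mod_cast hq)).2 ?_)
      have upper := (hE _ hn).2
      push_cast at upper
      linarith [(hE c hc).1]
    exact mem_image_of_mem _ (mem_filter.2 ⟨mem_range.2 (Nat.lt_succ_of_le hk_le), hn⟩)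
  calc E.ncard ≤ _ := Set.ncard_le_ncard subset_image (finite_toSet _)
    _ ≤ _ := by
      rw [Set.ncard_coe_finset]
      exact card_image_le

theorem exists_pow_le_and_log_add_one_le {m : ℕ} (hm : m ≠ 0) {u : ℝ} (hu : 1 ≤ u) :
    ∃ z : ℕ, (z : ℝ) ^ m ≤ u ∧ Real.log (u + 1) ≤ (m + 1) * Real.log (z + 1) := by
  have one_le_floor : 1 ≤ ⌊u⌋₊ := Nat.one_le_floor_iff u |>.2 hu
  set z := Nat.nthRoot m ⌊u⌋₊
  have pow_le : z ^ m ≤ ⌊u⌋₊ := (Nat.le_nthRoot_iff hm).1 le_rfl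
  have lt_pow : ⌊u⌋₊ + 1 ≤ (z + 1) ^ m := Nat.lt_pow_nthRoot_add_one hm _
  have one_le_z : 1 ≤ z := (Nat.le_nthRoot_iff hm).2 (by rwa [one_pow])
  have add_one_le : u + 1 ≤ (z + 1 : ℝ) ^ (m + 1) := calc
    u + 1 ≤ (z + 1) ^ m + 1 := by
      have : (⌊u⌋₊ + 1 : ℝ) ≤ (z + 1) ^ m := by exact_mod_cast lt_pow
      linarith [Nat.lt_floor_add_one u]
    _ ≤ (z + 1) ^ m + z * (z + 1) ^ m := by
      gcongr
      exact_mod_cast Nat.one_le_iff_ne_zero.2 (mul_ne_zero (Nat.ne_of_gt one_le_z) (by positivity))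
    _ = (z + 1 : ℝ) ^ (m + 1) := by ring
  refine ⟨z, ?_, ?_⟩
  · exact_mod_cast (Nat.le_floor_iff (by linarith)).1 pow_le
  · exact_mod_cast (Real.log_le_log (by linarith) add_one_le).trans_eq (Real.log_pow _ _)

theorem mul_log_add_one_le_log_div_add_one {α y q : ℝ} (hα0 : 0 ≤ α) (hα1 : α ≤ 1) (hy : 0 < y)
    (hq : 0 < q) (hqy : q ≤ y ^ (1 - α)) :
    α * Real.log (y + 1) ≤ Real.log (y / q + 1) := by
  have rpow_le : y ^ α ≤ y / q := by
    rw [le_div_iff₀ hq]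
    calc y ^ α * q ≤ y ^ α * y ^ (1 - α) := by gcongr
      _ = y := by rw [← Real.rpow_add hy, add_sub_cancel, Real.rpow_one]
  rw [← Real.log_rpow (by positivity)]
  refine Real.log_le_log (by positivity) ?_
  calc (y + 1) ^ α ≤ y ^ α + 1 ^ α := Real.rpow_add_le_add_rpow hy.le zero_le_one hα0 hα1
    _ ≤ y / q + 1 := by rw [Real.one_rpow]; gcongr

theorem squarefull_short_interval_AP_bound_general {x y : ℝ} {q : ℕ} {r : ℤ} (hq : 1 ≤ q)
    (hqy : (q : ℝ) ≤ y) :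
    ({n : ℕ | x < (n : ℝ) ∧ (n : ℝ) ≤ x + y ∧ 0 < n ∧ IsSquarefull n ∧
        (n : ℤ) ≡ r [ZMOD (q : ℤ)]}.ncard : ℝ) ≤
      40 * (Real.exp 1 + 1) * y / (q.totient * Real.log (y / q + 1)) := by
  have hq0 : (0 : ℝ) < q := by exact_mod_cast hq
  have : (0 : ℝ) < q.totient := by exact_mod_cast Nat.totient_pos.2 hq
  obtain ⟨c, A, hA, hAE, hEA⟩ := exists_subset_range_ncard_le_card_of_modEq
    (E := {n : ℕ | x < (n : ℝ) ∧ (n : ℝ) ≤ x + y ∧ 0 < n ∧ IsSquarefull n ∧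
      (n : ℤ) ≡ r [ZMOD (q : ℤ)]}) hq (fun _ hn ↦ ⟨hn.1, hn.2.1⟩) fun _ hn ↦ hn.2.2.2.2
  set u := y / q with hu
  have one_le_u : 1 ≤ u := (one_le_div hq0).2 hqy
  obtain ⟨z, hzu, hlog⟩ := exists_pow_le_and_log_add_one_le (m := 9) (by norm_num) one_le_u
  set S := ∑ d ∈ coprimeSquarefrees q z, (d : ℝ)⁻¹
  have log_le : Real.log (u + 1) ≤ 10 * (q / q.totient * (2 * S)) := calc
    Real.log (u + 1) ≤ ((9 : ℕ) + 1) * Real.log (z + 1) := hlog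
    _ = 10 * Real.log (z + 1) := by norm_num
    _ ≤ 10 * (q / q.totient * (2 * S)) := by
      gcongr
      exact log_add_one_le_sum_inv_coprimeSquarefrees (by omega) z
  have card_mul_le : #A * S ≤ 2 * (Real.exp 1 + 1) * u := calc
    #A * S ≤ Real.exp 1 * (⌊u⌋₊ + 1 : ℕ) + 2 * (z : ℝ) ^ 9 :=
      card_mul_sum_inv_coprimeSquarefrees_le hA fun k hk ↦ (hAE k hk).2.2.2.1
    _ ≤ Real.exp 1 * (u + u) + 2 * u := by
      push_cast
      gcongr
      exact Nat.floor_le (by linarith)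
    _ = 2 * (Real.exp 1 + 1) * u := by ring
  have log_pos : 0 < Real.log (u + 1) := Real.log_pos (by linarith)
  rw [le_div_iff₀ (by positivity)]
  calc _ ≤ (#A : ℝ) * (q.totient * (10 * (q / q.totient * (2 * S)))) := by gcongr
    _ = 20 * q * (#A * S) := by field_simp; ring
    _ ≤ 20 * q * (2 * (Real.exp 1 + 1) * u) := by gcongr
    _ = 40 * (Real.exp 1 + 1) * y := by rw [hu]; field_simp; ring

/-- For every `0 < α < 1` there is a constant `C = C(α) > 0` such that for all real
`x ≥ 1`, `1 ≤ y ≤ x`, and integers `q ≥ 1`, `r` with `gcd(r, q) = 1` and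
`q ≤ y^(1-α)`, the number of squarefull `n` with `x < n ≤ x + y` and
`n ≡ r (mod q)` is at most `C · y / (φ(q) · log (y + 1))`. -/
theorem squarefull_short_interval_AP_bound (α : ℝ) (hα0 : 0 < α) (hα1 : α < 1) :
    ∃ C : ℝ, 0 < C ∧ ∀ (x y : ℝ) (q : ℕ) (r : ℤ), 1 ≤ x → 1 ≤ y → y ≤ x →
      1 ≤ q → Int.gcd r (q : ℤ) = 1 → (q : ℝ) ≤ y ^ (1 - α) →
      (({n : ℕ | x < (n : ℝ) ∧ (n : ℝ) ≤ x + y ∧ 0 < n ∧ IsSquarefull n ∧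
          (n : ℤ) ≡ r [ZMOD (q : ℤ)]}.ncard : ℝ))
        ≤ C * y / ((Nat.totient q : ℝ) * Real.log (y + 1)) := by
  refine ⟨40 * (Real.exp 1 + 1) / α, by positivity, fun x y q r _ hy _ hq _ hqy ↦ ?_⟩
  have : (0 : ℝ) < q.totient := by exact_mod_cast Nat.totient_pos.2 hq
  have log_pos : 0 < Real.log (y + 1) := Real.log_pos (by linarith)
  have q_le_y : (q : ℝ) ≤ y := hqy.trans (Real.rpow_le_self_of_one_le hy (by linarith))
  calc _ ≤ 40 * (Real.exp 1 + 1) * y / (q.totient * Real.log (y / q + 1)) :=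
        squarefull_short_interval_AP_bound_general hq q_le_y
    _ ≤ 40 * (Real.exp 1 + 1) * y / (q.totient * (α * Real.log (y + 1))) := by
        gcongr
        exact mul_log_add_one_le_log_div_add_one hα0.le hα1.le (by positivity)
          (by exact_mod_cast hq) hqy
    _ = 40 * (Real.exp 1 + 1) / α * y / (q.totient * Real.log (y + 1)) := by field_simp
end

section
/- There exists a constant C > 0 such that for all real x ≥ 1 and all real y with 1 ≤ y ≤ x, the number of squarefull integers n with x < n ≤ x + y whose largest prime factor satisfies p⁺(n) ≤ y^{1/2} is at most C · y^{11/12}. -/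
/-!
A squarefull `n` is divisible by `b ^ 2` for some `b ≥ n ^ (1 / 3)`. If moreover all primes dividing
`n` are at most `P`, then removing prime factors from `b` one at a time moves down in steps of ratio
at most `P`, so as long as `A ≤ b` some divisor `k` of `b` lands in `[A, A * P]`, and `k ^ 2 ∣ n`.
An interval of length `y` contains at most `y / k ^ 2 + 1` multiples of `k ^ 2`; summing over
`k ∈ [A, A * P]`, and counting the `n ≤ A ^ 3` trivially, gives the bound
`A ^ 3 + 2 * y / A + A * P`. With `P = y ^ (1 / 2)` the choice `A = y ^ (1 / 4)` makes all three
terms of order `y ^ (3 / 4)`.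
-/

open Finset

section SquareDivisors

variable {R : Type*} [Semiring R] [LinearOrder R] [IsStrictOrderedRing R]

theorem IsSquarefull.exists_sq_dvd_le_cube {n : ℕ} (hn : IsSquarefull n) :
    ∃ b : ℕ, b ^ 2 ∣ n ∧ n ≤ b ^ 3 := by
  obtain ⟨a, b, rfl, ha⟩ := Nat.sq_mul_squarefree n
  refine ⟨b, dvd_mul_right _ _, ?_⟩
  obtain rfl | hb := eq_or_ne b 0
  · simp
  have hab : a ∣ b := by
    rw [← Nat.prod_primeFactors_of_squarefree ha, Nat.prod_primeFactors_dvd_iff hb]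
    intro p hpa
    have hp : p.Prime := Nat.prime_of_mem_primeFactors hpa
    have hsq : p * p ∣ b ^ 2 * a :=
      sq p ▸ hn p hp ((Nat.dvd_of_mem_primeFactors hpa).mul_left _)
    have hpb : p ∣ b ^ 2 := ha.dvd_of_squarefree_of_mul_dvd_mul_left hsq
    exact hp.mem_primeFactors (hp.dvd_of_dvd_pow hpb) hb
  calc b ^ 2 * a ≤ b ^ 2 * b := by gcongr; exact Nat.le_of_dvd (Nat.pos_of_ne_zero hb) hab
    _ = b ^ 3 := (pow_succ b 2).symm

theorem exists_dvd_mem_Icc_of_forall_prime_le {m : ℕ} {A P : R} (hAm : A ≤ m) (hAP : 1 ≤ A * P)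
    (hm : ∀ p : ℕ, p.Prime → p ∣ m → (p : R) ≤ P) :
    ∃ k : ℕ, k ∣ m ∧ (k : R) ∈ Set.Icc A (A * P) := by
  classical
  -- The least divisor that is at least `A` drops below `A` once a prime factor is removed.
  have hex : ∃ k : ℕ, k ∣ m ∧ A ≤ k := ⟨m, dvd_rfl, hAm⟩
  obtain ⟨k, ⟨hkm, hAk⟩, hmin⟩ : ∃ k : ℕ, (k ∣ m ∧ A ≤ k) ∧ ∀ j < k, ¬(j ∣ m ∧ A ≤ j) :=
    ⟨Nat.find hex, Nat.find_spec hex, fun _ ↦ Nat.find_min hex⟩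
  refine ⟨k, hkm, hAk, ?_⟩
  obtain hk | hk := le_or_gt k 1
  · exact (Nat.cast_le_one.mpr hk).trans hAP
  obtain ⟨p, hp, j, rfl⟩ := Nat.exists_prime_and_dvd hk.ne'
  have hj : 0 < j := Nat.pos_of_mul_pos_left (Nat.zero_lt_of_lt hk)
  have hjA : (j : R) < A := not_le.mp fun hle ↦
    hmin j (lt_mul_of_one_lt_left hj hp.one_lt) ⟨(dvd_mul_left j p).trans hkm, hle⟩
  have hpP : (p : R) ≤ P := hm p hp ((dvd_mul_right p j).trans hkm)
  calc ((p * j : ℕ) : R) = j * p := by rw [mul_comm, Nat.cast_mul]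
    _ ≤ A * P := mul_le_mul hjA.le hpP p.cast_nonneg (j.cast_nonneg.trans hjA.le)

theorem IsSquarefull.exists_sq_dvd_mem_Icc {n : ℕ} {A P : R} (hn : IsSquarefull n)
    (hAn : A ^ 3 ≤ n) (hAP : 1 ≤ A * P) (hP : ∀ p : ℕ, p.Prime → p ∣ n → (p : R) ≤ P) :
    ∃ k : ℕ, k ^ 2 ∣ n ∧ (k : R) ∈ Set.Icc A (A * P) := by
  obtain ⟨b, hbn, hnb⟩ := hn.exists_sq_dvd_le_cube
  have hAb : A ≤ b :=
    le_of_pow_le_pow_left₀ three_ne_zero b.cast_nonneg (hAn.trans (mod_cast hnb))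
  have hbP : ∀ p : ℕ, p.Prime → p ∣ b → (p : R) ≤ P := fun p hp hpb ↦
    hP p hp ((hpb.trans (dvd_pow_self b two_ne_zero)).trans hbn)
  obtain ⟨k, hkb, hk⟩ := exists_dvd_mem_Icc_of_forall_prime_le hAb hAP hbP
  exact ⟨k, (pow_dvd_pow_of_dvd hkb 2).trans hbn, hk⟩

end SquareDivisors

theorem finite_setOf_natCast_mem_Ioc (x z : ℝ) : {n : ℕ | (n : ℝ) ∈ Set.Ioc x z}.Finite :=
  (Set.finite_Iic ⌊z⌋₊).subset fun _ hn ↦ Nat.le_floor hn.2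

theorem ncard_setOf_natCast_mem_Ioc_dvd_le (x : ℝ) {y : ℝ} (hy : 0 ≤ y) {d : ℕ} (hd : 0 < d) :
    ({n : ℕ | (n : ℝ) ∈ Set.Ioc x (x + y) ∧ d ∣ n}.ncard : ℝ) ≤ y / d + 1 := by
  have hd' : (0 : ℝ) < d := mod_cast hd
  set J : Finset ℤ := Ioc ⌊x / d⌋ ⌊(x + y) / d⌋
  have hsub : {n : ℕ | (n : ℝ) ∈ Set.Ioc x (x + y) ∧ d ∣ n} ⊆
      (J.image fun j ↦ ((d : ℤ) * j).toNat : Finset ℕ) := by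
    rintro _ ⟨⟨hx, hxy⟩, j, rfl⟩
    push_cast at hx hxy
    refine mem_coe.mpr (mem_image.mpr ⟨j, mem_Ioc.mpr ⟨?_, ?_⟩, by norm_cast⟩)
    · exact Int.floor_lt.mpr ((div_lt_iff₀' hd').mpr (mod_cast hx))
    · exact Int.le_floor.mpr ((le_div_iff₀' hd').mpr (mod_cast hxy))
  have hfloor : ⌊x / d⌋ ≤ ⌊(x + y) / d⌋ := by gcongr; linarith
  have hJ : (#J : ℝ) = ⌊(x + y) / d⌋ - ⌊x / d⌋ := by
    exact_mod_cast Int.card_Ioc_of_le _ _ hfloor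
  calc ({n : ℕ | (n : ℝ) ∈ Set.Ioc x (x + y) ∧ d ∣ n}.ncard : ℝ)
      ≤ #J := by
        have := Set.ncard_le_ncard hsub (finite_toSet _)
        rw [Set.ncard_coe_finset] at this
        exact_mod_cast this.trans card_image_le
    _ = ⌊(x + y) / d⌋ - ⌊x / d⌋ := hJ
    _ ≤ (x + y) / d - (x / d - 1) :=
        sub_le_sub (Int.floor_le _) (Int.sub_one_lt_floor _).le
    _ = y / d + 1 := by ring

theorem sum_Icc_ceil_inv_sq_le {A : ℝ} (hA : 0 < A) (N : ℕ) :
    ∑ k ∈ Icc ⌈A⌉₊ N, ((k : ℝ) ^ 2)⁻¹ ≤ 2 / A := by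
  obtain ⟨M, hM⟩ := Nat.exists_eq_add_one.mpr (Nat.ceil_pos.mpr hA)
  have hAM : A ≤ (M : ℝ) + 1 := by exact_mod_cast hM ▸ Nat.le_ceil A
  have hIcc : Icc ⌈A⌉₊ N = Ioo M (N + 1) := by ext; simp only [mem_Icc, mem_Ioo]; omega
  calc ∑ k ∈ Icc ⌈A⌉₊ N, ((k : ℝ) ^ 2)⁻¹ = ∑ k ∈ Ioo M (N + 1), ((k : ℝ) ^ 2)⁻¹ := by rw [hIcc]
    _ ≤ 2 / (M + 1) := sum_Ioo_inv_sq_le M (N + 1)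
    _ ≤ 2 / A := by gcongr

theorem sum_Icc_ceil_floor_div_sq_add_one_le {A B y : ℝ} (hA : 0 < A) (hB : 0 ≤ B) (hy : 0 ≤ y) :
    ∑ k ∈ Icc ⌈A⌉₊ ⌊B⌋₊, (y / (k : ℝ) ^ 2 + 1) ≤ 2 * y / A + B := by
  have hcard : #(Icc ⌈A⌉₊ ⌊B⌋₊) ≤ ⌊B⌋₊ := by
    have := Nat.ceil_pos.mpr hA
    rw [Nat.card_Icc]; omega
  calc ∑ k ∈ Icc ⌈A⌉₊ ⌊B⌋₊, (y / (k : ℝ) ^ 2 + 1)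
      = y * ∑ k ∈ Icc ⌈A⌉₊ ⌊B⌋₊, ((k : ℝ) ^ 2)⁻¹ + #(Icc ⌈A⌉₊ ⌊B⌋₊) := by
        simp only [sum_add_distrib, div_eq_mul_inv, mul_sum, sum_const, nsmul_eq_mul, mul_one]
    _ ≤ y * (2 / A) + ⌊B⌋₊ := by gcongr; exact sum_Icc_ceil_inv_sq_le hA _
    _ ≤ y * (2 / A) + B := by gcongr; exact Nat.floor_le hB
    _ = 2 * y / A + B := by ring

theorem ncard_smooth_squarefull_Ioc_le (x : ℝ) {y A P : ℝ} (hy : 0 ≤ y) (hA : 0 < A)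
    (hAP : 1 ≤ A * P) :
    ({n : ℕ | x < (n : ℝ) ∧ (n : ℝ) ≤ x + y ∧ 0 < n ∧ IsSquarefull n ∧
        ∀ p : ℕ, p.Prime → p ∣ n → (p : ℝ) ≤ P}.ncard : ℝ) ≤ A ^ 3 + (2 * y / A + A * P) := by
  set S := {n : ℕ | x < (n : ℝ) ∧ (n : ℝ) ≤ x + y ∧ 0 < n ∧ IsSquarefull n ∧
    ∀ p : ℕ, p.Prime → p ∣ n → (p : ℝ) ≤ P}
  let small : Set ℕ := Ioc 0 ⌊A ^ 3⌋₊
  let K : Finset ℕ := Icc ⌈A⌉₊ ⌊A * P⌋₊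
  let mult (k : ℕ) : Set ℕ := {n | (n : ℝ) ∈ Set.Ioc x (x + y) ∧ k ^ 2 ∣ n}
  have hcover : S ⊆ small ∪ ⋃ k ∈ K, mult k := by
    rintro n ⟨hxn, hny, hn, hsq, hP⟩
    obtain hnA | hAn := le_total (n : ℝ) (A ^ 3)
    · exact .inl (mem_coe.mpr (mem_Ioc.mpr ⟨hn, Nat.le_floor hnA⟩))
    · obtain ⟨k, hkn, hAk, hkP⟩ := hsq.exists_sq_dvd_mem_Icc hAn hAP hP
      have hk : k ∈ K := mem_Icc.mpr ⟨Nat.ceil_le.mpr hAk, Nat.le_floor hkP⟩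
      exact .inr (Set.mem_biUnion hk ⟨⟨hxn, hny⟩, hkn⟩)
  have hfin : (small ∪ ⋃ k ∈ K, mult k).Finite :=
    (finite_toSet _).union <| K.finite_toSet.biUnion fun _ _ ↦
      (finite_setOf_natCast_mem_Ioc x (x + y)).subset fun _ hn ↦ hn.1
  have hsmall : (small.ncard : ℝ) ≤ A ^ 3 := by
    rw [Set.ncard_coe_finset, Nat.card_Ioc, Nat.sub_zero]
    exact Nat.floor_le (by positivity)
  have hmult : ∀ k ∈ K, ((mult k).ncard : ℝ) ≤ y / (k : ℝ) ^ 2 + 1 := fun k hk ↦ by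
    have hk0 : 0 < k := (Nat.ceil_pos.mpr hA).trans_le (mem_Icc.mp hk).1
    exact_mod_cast ncard_setOf_natCast_mem_Ioc_dvd_le x hy (pow_pos hk0 2)
  calc (S.ncard : ℝ) ≤ small.ncard + ∑ k ∈ K, ((mult k).ncard : ℝ) := by
        exact_mod_cast (Set.ncard_le_ncard hcover hfin).trans <|
          (Set.ncard_union_le _ _).trans (by gcongr; exact K.set_ncard_biUnion_le mult)
    _ ≤ A ^ 3 + ∑ k ∈ K, (y / (k : ℝ) ^ 2 + 1) := add_le_add hsmall (sum_le_sum hmult)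
    _ ≤ A ^ 3 + (2 * y / A + A * P) := by
        gcongr; exact sum_Icc_ceil_floor_div_sq_add_one_le hA (zero_le_one.trans hAP) hy

theorem smooth_squarefull_short_interval_bound_general (x : ℝ) {y : ℝ} (hy : 1 ≤ y) :
    ({n : ℕ | x < (n : ℝ) ∧ (n : ℝ) ≤ x + y ∧ 0 < n ∧ IsSquarefull n ∧
        ∀ p : ℕ, p.Prime → p ∣ n → (p : ℝ) ≤ y ^ ((1 : ℝ) / 2)}.ncard : ℝ)
      ≤ 4 * y ^ ((3 : ℝ) / 4) := by
  have hy0 : 0 < y := zero_lt_one.trans_le hy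
  set A : ℝ := y ^ ((1 : ℝ) / 4) with hA
  have hcube : A ^ 3 = y ^ ((3 : ℝ) / 4) := by
    rw [hA, ← Real.rpow_mul_natCast hy0.le]; norm_num
  have hdiv : y / A = y ^ ((3 : ℝ) / 4) := by
    rw [hA, ← Real.rpow_one_sub' hy0.le] <;> norm_num
  have hmul : A * y ^ ((1 : ℝ) / 2) = y ^ ((3 : ℝ) / 4) := by
    rw [hA, ← Real.rpow_add hy0]; norm_num
  have hAP : 1 ≤ A * y ^ ((1 : ℝ) / 2) := hmul ▸ Real.one_le_rpow hy (by norm_num)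
  refine (ncard_smooth_squarefull_Ioc_le x hy0.le (Real.rpow_pos_of_pos hy0 _) hAP).trans_eq ?_
  rw [hcube, mul_div_assoc, hdiv, hmul]
  ring

/-- There is a constant `C > 0` such that for all real `x ≥ 1` and `1 ≤ y ≤ x`,
the number of squarefull `n` with `x < n ≤ x + y` all of whose prime factors are
at most `y^(1/2)` is at most `C · y^(11/12)`. -/
theorem smooth_squarefull_short_interval_bound :
    ∃ C : ℝ, 0 < C ∧ ∀ x y : ℝ, 1 ≤ x → 1 ≤ y → y ≤ x →
      (({n : ℕ | x < (n : ℝ) ∧ (n : ℝ) ≤ x + y ∧ 0 < n ∧ IsSquarefull n ∧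
          ∀ p : ℕ, p.Prime → p ∣ n → (p : ℝ) ≤ y ^ ((1 : ℝ) / 2)}.ncard : ℝ))
        ≤ C * y ^ ((11 : ℝ) / 12) := by
  refine ⟨4, four_pos, fun x y _ hy _ ↦ ?_⟩
  exact (smooth_squarefull_short_interval_bound_general x hy).trans (by gcongr 4 * y ^ ?_; norm_num)
end

section
/- For every integer k ≥ 2 there exists a constant C > 0 such that for all real x ≥ 1 and all real y with 1 ≤ y ≤ x, the number of k-full integers n with x < n ≤ x + y whose largest prime factor satisfies p⁺(n) ≤ y^{1/2} is at most C · y^{11/12}. -/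
/-!
Dividing the exponents of a `k`-full number `n` by `k` and rounding down gives an `m` with
`m ^ k ∣ n` and `n ≤ m ^ (2 * k - 1)`. For `n > y` this `m` exceeds `t := y ^ (1 / (2 * k - 1))`,
and if the prime factors of `m` are at most `z`, then its least divisor `e > t` is at most
`max (t ^ 2) z`: it is a prime or a product of two divisors that are at most `t`. Each such `e ^ k`
divides at most `y / e ^ k + 1` integers of `(x, x + y]`; summing over `e` gives the bound
`2 * y / t ^ (k - 1) + max (t ^ 2) z`.
-/

open Finset

theorem le_two_mul_sub_one_mul_div {k a : ℕ} (hk : 0 < k) (hka : k ≤ a) :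
    a ≤ (2 * k - 1) * (a / k) := by
  have hquot : 1 ≤ a / k := (Nat.one_le_div_iff hk).2 hka
  have hrem : a % k ≤ k - 1 := Nat.le_sub_one_of_lt (Nat.mod_lt a hk)
  calc a = k * (a / k) + a % k := (Nat.div_add_mod a k).symm
    _ ≤ k * (a / k) + (k - 1) * (a / k) := by
        gcongr
        exact hrem.trans (Nat.le_mul_of_pos_right _ hquot)
    _ = (2 * k - 1) * (a / k) := by
        rw [← add_mul, ← Nat.add_sub_assoc hk, ← two_mul]

theorem IsKFull.dvd_floorRoot_pow {k n : ℕ} (hk : k ≠ 0) (hn : IsKFull k n) :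
    n ∣ Nat.floorRoot k n ^ (2 * k - 1) := by
  obtain rfl | hn0 := eq_or_ne n 0
  · simp [show 2 * k - 1 ≠ 0 by omega]
  have hroot : Nat.floorRoot k n ≠ 0 := Nat.floorRoot_ne_zero.2 ⟨hk, hn0⟩
  refine (Nat.factorization_prime_le_iff_dvd hn0 (pow_ne_zero _ hroot)).1 fun p hp => ?_
  rw [Nat.factorization_pow, Nat.factorization_floorRoot]
  change n.factorization p ≤ (2 * k - 1) * (n.factorization p / k)
  obtain hp0 | hp0 := eq_or_ne (n.factorization p) 0
  · simp [hp0]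
  · exact le_two_mul_sub_one_mul_div (Nat.pos_of_ne_zero hk)
      ((hp.pow_dvd_iff_le_factorization hn0).1 (hn p hp (Nat.dvd_of_factorization_pos hp0)))

theorem exists_dvd_lt_le_max_sq {m : ℕ} {t z : ℝ} (ht : 1 ≤ t) (htm : t < m)
    (hm : ∀ p : ℕ, p.Prime → p ∣ m → (p : ℝ) ≤ z) :
    ∃ e : ℕ, e ∣ m ∧ t < e ∧ (e : ℝ) ≤ max (t ^ 2) z := by
  classical
  have hex : ∃ e : ℕ, e ∣ m ∧ t < e := ⟨m, dvd_rfl, htm⟩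
  obtain ⟨e, ⟨hem, hte⟩, hmin⟩ :
      ∃ e : ℕ, (e ∣ m ∧ t < e) ∧ ∀ d < e, ¬(d ∣ m ∧ t < d) :=
    ⟨Nat.find hex, Nat.find_spec hex, fun _ => Nat.find_min hex⟩
  refine ⟨e, hem, hte, ?_⟩
  have he1 : 1 < e := by exact_mod_cast ht.trans_lt hte
  have le_of_proper : ∀ d : ℕ, d ∣ e → d ≠ e → (d : ℝ) ≤ t := fun d hde hne =>
    not_lt.1 fun htd =>
      hmin d ((Nat.le_of_dvd (by omega) hde).lt_of_ne hne) ⟨hde.trans hem, htd⟩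
  by_cases hprime : e.Prime
  · exact le_max_of_le_right (hm e hprime hem)
  · obtain ⟨a, ha, ha1, hae⟩ := Nat.exists_dvd_of_not_prime he1 hprime
    obtain ⟨b, rfl⟩ := ha
    have hb : b ≠ a * b := fun h => ha1 (by nlinarith)
    apply le_max_of_le_left
    calc ((a * b : ℕ) : ℝ) = a * b := Nat.cast_mul a b
      _ ≤ t * t := by
          gcongr
          · exact le_of_proper a (dvd_mul_right a b) hae
          · exact le_of_proper b (dvd_mul_left b a) hb
      _ = t ^ 2 := (sq t).symm

theorem IsKFull.exists_pow_dvd {k n : ℕ} {t z : ℝ} (hk : k ≠ 0) (hn : IsKFull k n)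
    (ht : 1 ≤ t) (htn : t ^ (2 * k - 1) < n)
    (hz : ∀ p : ℕ, p.Prime → p ∣ n → (p : ℝ) ≤ z) :
    ∃ e : ℕ, t < e ∧ (e : ℝ) ≤ max (t ^ 2) z ∧ e ^ k ∣ n := by
  have hn0 : n ≠ 0 := by
    rintro rfl
    exact htn.not_ge (by simpa using by positivity)
  have hle : n ≤ Nat.floorRoot k n ^ (2 * k - 1) :=
    Nat.le_of_dvd (pow_pos (Nat.pos_of_ne_zero (Nat.floorRoot_ne_zero.2 ⟨hk, hn0⟩)) _)
      (hn.dvd_floorRoot_pow hk)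
  have ht_root : t < Nat.floorRoot k n :=
    lt_of_pow_lt_pow_left₀ (2 * k - 1) (Nat.cast_nonneg _)
      (htn.trans_le (by exact_mod_cast hle))
  obtain ⟨e, he, hte, hez⟩ := exists_dvd_lt_le_max_sq ht ht_root fun p hp hdvd =>
    hz p hp (hdvd.trans ((dvd_pow_self _ hk).trans Nat.floorRoot_pow_dvd))
  exact ⟨e, hte, hez, Nat.pow_dvd_iff_dvd_floorRoot.2 he⟩

theorem card_Ioc_floor_filter_dvd_le {x y : ℝ} (hx : 0 ≤ x) (hy : 0 ≤ y) {d : ℕ} (hd : 0 < d) :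
    (#{n ∈ Ioc ⌊x⌋₊ ⌊x + y⌋₊ | d ∣ n} : ℝ) ≤ y / d + 1 := by
  have hsub : {n ∈ Ioc ⌊x⌋₊ ⌊x + y⌋₊ | d ∣ n} ⊆
      (Ioc (⌊x⌋₊ / d) (⌊x + y⌋₊ / d)).image (d * ·) := by
    intro n hn
    obtain ⟨hn, q, rfl⟩ := mem_filter.1 hn
    obtain ⟨hxq, hqy⟩ := mem_Ioc.1 hn
    refine mem_image.2 ⟨q, mem_Ioc.2 ⟨?_, ?_⟩, rfl⟩
    · rwa [Nat.div_lt_iff_lt_mul hd, mul_comm]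
    · rwa [Nat.le_div_iff_mul_le hd, mul_comm]
  have hcard : #{n ∈ Ioc ⌊x⌋₊ ⌊x + y⌋₊ | d ∣ n} ≤ ⌊(x + y) / d⌋₊ - ⌊x / d⌋₊ := by
    simpa only [Nat.floor_div_natCast, Nat.card_Ioc] using
      (card_le_card hsub).trans card_image_le
  have hmono : ⌊x / d⌋₊ ≤ ⌊(x + y) / d⌋₊ := by
    gcongr
    linarith
  have hupper : (⌊(x + y) / d⌋₊ : ℝ) ≤ (x + y) / d := Nat.floor_le (by positivity)
  have hlower : x / d < ⌊x / d⌋₊ + 1 := Nat.lt_floor_add_one _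
  calc (#{n ∈ Ioc ⌊x⌋₊ ⌊x + y⌋₊ | d ∣ n} : ℝ)
      ≤ ⌊(x + y) / d⌋₊ - ⌊x / d⌋₊ := by
        rw [← Nat.cast_sub hmono]
        exact_mod_cast hcard
    _ ≤ y / d + 1 := by linarith [add_div x y (d : ℝ)]

theorem sum_Ioc_floor_inv_pow_le {k : ℕ} (hk : 2 ≤ k) {t : ℝ} (ht : 0 < t) (N : ℕ) :
    ∑ e ∈ Ioc ⌊t⌋₊ N, ((e : ℝ) ^ k)⁻¹ ≤ 2 / t ^ (k - 1) := by
  obtain ⟨j, rfl⟩ := Nat.exists_eq_add_of_le hk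
  calc ∑ e ∈ Ioc ⌊t⌋₊ N, ((e : ℝ) ^ (2 + j))⁻¹
      ≤ ∑ e ∈ Ioc ⌊t⌋₊ N, ((e : ℝ) ^ 2)⁻¹ * (t ^ j)⁻¹ := by
        refine sum_le_sum fun e he => ?_
        have hte : t < e := (Nat.floor_lt ht.le).1 (mem_Ioc.1 he).1
        rw [pow_add, mul_inv]
        gcongr
    _ = (∑ e ∈ Ioo ⌊t⌋₊ (N + 1), ((e : ℝ) ^ 2)⁻¹) * (t ^ j)⁻¹ := by
        rw [sum_mul, Ioo_add_one_right_eq_Ioc]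
    _ ≤ 2 / (⌊t⌋₊ + 1) * (t ^ j)⁻¹ := by
        gcongr
        exact sum_Ioo_inv_sq_le _ _
    _ ≤ 2 / t * (t ^ j)⁻¹ := by
        gcongr
        exact (Nat.lt_floor_add_one t).le
    _ = 2 / t ^ (2 + j - 1) := by
        rw [show 2 + j - 1 = j + 1 by omega, pow_succ]
        field_simp

theorem card_Ioc_floor_filter_exists_pow_dvd_le {k : ℕ} (hk : 2 ≤ k) {x y t w : ℝ}
    (hx : 0 ≤ x) (hy : 0 ≤ y) (ht : 0 < t) (hw : 0 ≤ w) :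
    (#{n ∈ Ioc ⌊x⌋₊ ⌊x + y⌋₊ | ∃ e ∈ Ioc ⌊t⌋₊ ⌊w⌋₊, e ^ k ∣ n} : ℝ) ≤
      2 * (y / t ^ (k - 1)) + w := by
  have hcover : {n ∈ Ioc ⌊x⌋₊ ⌊x + y⌋₊ | ∃ e ∈ Ioc ⌊t⌋₊ ⌊w⌋₊, e ^ k ∣ n} ⊆
      (Ioc ⌊t⌋₊ ⌊w⌋₊).biUnion fun e => {n ∈ Ioc ⌊x⌋₊ ⌊x + y⌋₊ | e ^ k ∣ n} := by
    grind
  have hterm : ∀ e ∈ Ioc ⌊t⌋₊ ⌊w⌋₊,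
      (#{n ∈ Ioc ⌊x⌋₊ ⌊x + y⌋₊ | e ^ k ∣ n} : ℝ) ≤ y * ((e : ℝ) ^ k)⁻¹ + 1 := by
    intro e he
    have he0 : 0 < e := (Nat.zero_le _).trans_lt (mem_Ioc.1 he).1
    simpa only [Nat.cast_pow, div_eq_mul_inv] using
      card_Ioc_floor_filter_dvd_le hx hy (pow_pos he0 k)
  have hnumber : (#(Ioc ⌊t⌋₊ ⌊w⌋₊) : ℝ) ≤ w := by
    rw [Nat.card_Ioc]
    exact (Nat.cast_le.2 (Nat.sub_le _ _)).trans (Nat.floor_le hw)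
  calc (#{n ∈ Ioc ⌊x⌋₊ ⌊x + y⌋₊ | ∃ e ∈ Ioc ⌊t⌋₊ ⌊w⌋₊, e ^ k ∣ n} : ℝ)
      ≤ ∑ e ∈ Ioc ⌊t⌋₊ ⌊w⌋₊, (#{n ∈ Ioc ⌊x⌋₊ ⌊x + y⌋₊ | e ^ k ∣ n} : ℝ) := by
        exact_mod_cast (card_le_card hcover).trans card_biUnion_le
    _ ≤ ∑ e ∈ Ioc ⌊t⌋₊ ⌊w⌋₊, (y * ((e : ℝ) ^ k)⁻¹ + 1) := sum_le_sum hterm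
    _ = y * ∑ e ∈ Ioc ⌊t⌋₊ ⌊w⌋₊, ((e : ℝ) ^ k)⁻¹ + #(Ioc ⌊t⌋₊ ⌊w⌋₊) := by
        rw [sum_add_distrib, mul_sum, sum_const, nsmul_one]
    _ ≤ y * (2 / t ^ (k - 1)) + w := by
        gcongr
        exact sum_Ioc_floor_inv_pow_le hk ht _
    _ = 2 * (y / t ^ (k - 1)) + w := by ring

theorem ncard_smooth_kfull_Ioc_le {k : ℕ} (hk : 2 ≤ k) {x y t z : ℝ} (ht : 1 ≤ t)
    (htx : t ^ (2 * k - 1) ≤ x) (hy : 0 ≤ y) :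
    ({n : ℕ | x < (n : ℝ) ∧ (n : ℝ) ≤ x + y ∧ 0 < n ∧ IsKFull k n ∧
        ∀ p : ℕ, p.Prime → p ∣ n → (p : ℝ) ≤ z}.ncard : ℝ) ≤
      2 * (y / t ^ (k - 1)) + max (t ^ 2) z := by
  have hx : 0 ≤ x := le_trans (by positivity) htx
  have hw : 0 ≤ max (t ^ 2) z := le_max_of_le_left (sq_nonneg t)
  refine le_trans ?_ (card_Ioc_floor_filter_exists_pow_dvd_le hk hx hy (by linarith) hw)
  rw [← Set.ncard_coe_finset]
  refine Nat.cast_le.2 (Set.ncard_le_ncard ?_ (finite_toSet _))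
  rintro n ⟨hxn, hny, -, hfull, hsmooth⟩
  obtain ⟨e, hte, hew, hdvd⟩ :=
    hfull.exists_pow_dvd (by omega) ht (htx.trans_lt hxn) hsmooth
  exact mem_coe.2 <| mem_filter.2
    ⟨mem_Ioc.2 ⟨(Nat.floor_lt hx).2 hxn, Nat.le_floor hny⟩,
      e, mem_Ioc.2 ⟨(Nat.floor_lt (by linarith)).2 hte, Nat.le_floor hew⟩, hdvd⟩

theorem smooth_kfull_short_interval_bound_general {k : ℕ} (hk : 2 ≤ k) {x y : ℝ} (hy : 1 ≤ y)
    (hyx : y ≤ x) (z : ℝ) :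
    ({n : ℕ | x < (n : ℝ) ∧ (n : ℝ) ≤ x + y ∧ 0 < n ∧ IsKFull k n ∧
        ∀ p : ℕ, p.Prime → p ∣ n → (p : ℝ) ≤ z}.ncard : ℝ) ≤
      2 * y ^ ((k : ℝ) / (2 * k - 1)) + max (y ^ ((2 : ℝ) / (2 * k - 1))) z := by
  have hy0 : 0 < y := by linarith
  have hk' : (2 : ℝ) ≤ k := by exact_mod_cast hk
  have hs : (0 : ℝ) < 2 * k - 1 := by linarith
  set t : ℝ := y ^ (1 / (2 * k - 1) : ℝ)
  have ht_pow (j : ℕ) : t ^ j = y ^ ((j : ℝ) / (2 * k - 1)) := by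
    rw [← Real.rpow_mul_natCast hy0.le, one_div_mul_eq_div]
  have ht_main : t ^ (2 * k - 1) = y := by
    rw [ht_pow, Nat.cast_sub (by omega)]
    push_cast
    rw [div_self hs.ne', Real.rpow_one]
  have ht_div : y / t ^ (k - 1) = y ^ ((k : ℝ) / (2 * k - 1)) := by
    calc y / t ^ (k - 1) = t ^ (k + (k - 1)) / t ^ (k - 1) := by
          rw [show k + (k - 1) = 2 * k - 1 by omega, ht_main]
      _ = t ^ k := by rw [pow_add, mul_div_cancel_right₀ _ (by positivity)]
      _ = y ^ ((k : ℝ) / (2 * k - 1)) := ht_pow k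
  have hbound := ncard_smooth_kfull_Ioc_le hk (z := z)
    (Real.one_le_rpow hy (by positivity) : 1 ≤ t) (ht_main.trans_le hyx) hy0.le
  rwa [ht_div, ht_pow 2, Nat.cast_ofNat] at hbound

theorem rpow_div_two_mul_sub_one_le {k : ℕ} (hk : 2 ≤ k) {y a b : ℝ} (hy : 1 ≤ y) (ha : a ≤ k)
    (hb : 2 / 3 ≤ b) : y ^ (a / (2 * k - 1)) ≤ y ^ b := by
  have hk' : (2 : ℝ) ≤ k := by exact_mod_cast hk
  refine Real.rpow_le_rpow_of_exponent_le hy (le_trans ?_ hb)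
  rw [div_le_div_iff₀] <;> linarith

/-- For every integer `k ≥ 2` there is a constant `C > 0` such that for all real
`x ≥ 1` and `1 ≤ y ≤ x`, the number of `k`-full `n` with `x < n ≤ x + y` all of
whose prime factors are at most `y^(1/2)` is at most `C · y^(11/12)`. -/
theorem smooth_kfull_short_interval_bound (k : ℕ) (hk : 2 ≤ k) :
    ∃ C : ℝ, 0 < C ∧ ∀ x y : ℝ, 1 ≤ x → 1 ≤ y → y ≤ x →
      (({n : ℕ | x < (n : ℝ) ∧ (n : ℝ) ≤ x + y ∧ 0 < n ∧ IsKFull k n ∧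
          ∀ p : ℕ, p.Prime → p ∣ n → (p : ℝ) ≤ y ^ ((1 : ℝ) / 2)}.ncard : ℝ))
        ≤ C * y ^ ((11 : ℝ) / 12) := by
  refine ⟨3, by norm_num, fun x y _ hy hyx => ?_⟩
  have hmain := rpow_div_two_mul_sub_one_le (b := 11 / 12) hk hy le_rfl (by norm_num)
  have hmax := max_le
    (rpow_div_two_mul_sub_one_le (b := 11 / 12) hk hy (Nat.ofNat_le_cast.2 hk) (by norm_num))
    (Real.rpow_le_rpow_of_exponent_le (y := 1 / 2) hy (by norm_num))
  linarith [smooth_kfull_short_interval_bound_general hk hy hyx (y ^ ((1 : ℝ) / 2))]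
end

section
/- Assume the abc-conjecture. Then for every integer k ≥ 3 and every real ε > 0 there exists a constant C = C(k, ε) > 0 such that for all real x ≥ 1 and all real y with 1 ≤ y ≤ x, the number of k-full integers in the interval (x, x + y] satisfies Q_k(x + y) − Q_k(x) ≤ C · y^{(2 + ε)/k}. -/
/-- The radical (kernel) of a natural number: the product of its prime divisors. -/
def natRadical (n : ℕ) : ℕ := ∏ p ∈ n.primeFactors, p

/-- The abc-conjecture: for every `ε > 0` there is `C_ε > 0` such that for all
coprime positive integers `a`, `b`, `c` with `a + b = c`, one has
`c ≤ C_ε · rad(a·b·c)^(1+ε)`. -/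
def ABCConjecture : Prop :=
  ∀ ε : ℝ, 0 < ε → ∃ Cε : ℝ, 0 < Cε ∧ ∀ a b c : ℕ,
    0 < a → 0 < b → 0 < c → Nat.Coprime a b → a + b = c →
    (c : ℝ) ≤ Cε * (natRadical (a * b * c) : ℝ) ^ (1 + ε)

theorem natRadical_eq_radical (n : ℕ) : natRadical n = UniqueFactorizationMonoid.radical n :=
  Nat.radical_eq_prod_primeFactors.symm

theorem natRadical_pos (n : ℕ) : 0 < natRadical n :=
  natRadical_eq_radical n ▸ Nat.radical_pos n

theorem natRadical_dvd_self (n : ℕ) : natRadical n ∣ n := by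
  simpa only [natRadical_eq_radical] using UniqueFactorizationMonoid.radical_dvd_self

theorem natRadical_le_self {n : ℕ} (hn : 0 < n) : natRadical n ≤ n :=
  Nat.le_of_dvd hn (natRadical_dvd_self n)

theorem natRadical_mul_le (m n : ℕ) : natRadical (m * n) ≤ natRadical m * natRadical n := by
  refine Nat.le_of_dvd (mul_pos (natRadical_pos m) (natRadical_pos n)) ?_
  simpa only [natRadical_eq_radical] using UniqueFactorizationMonoid.radical_mul_dvd

theorem natRadical_le_of_dvd {m n : ℕ} (hmn : m ∣ n) (hn : n ≠ 0) :
    natRadical m ≤ natRadical n := by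
  refine Nat.le_of_dvd (natRadical_pos n) ?_
  simpa only [natRadical_eq_radical] using UniqueFactorizationMonoid.radical_dvd_radical hmn hn

theorem IsKFull.natRadical_pow_dvd {k n : ℕ} (h : IsKFull k n) : natRadical n ^ k ∣ n := by
  rw [natRadical, ← Finset.prod_pow]
  refine Finset.prod_dvd_of_isRelPrime (fun p hp q hq hpq ↦ ?_) fun p hp ↦
    h p (Nat.prime_of_mem_primeFactors hp) (Nat.dvd_of_mem_primeFactors hp)
  exact Nat.coprime_iff_isRelPrime.1 <| Nat.coprime_pow_primes k k
    (Nat.prime_of_mem_primeFactors hp) (Nat.prime_of_mem_primeFactors hq) hpq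

theorem IsKFull.natRadical_le_rpow {k n : ℕ} (h : IsKFull k n) (hk : k ≠ 0) (hn : 0 < n) :
    (natRadical n : ℝ) ≤ (n : ℝ) ^ (k : ℝ)⁻¹ := by
  rw [Real.le_rpow_inv_iff_of_pos (by positivity) (by positivity) (by positivity),
    Real.rpow_natCast]
  exact_mod_cast Nat.le_of_dvd hn h.natRadical_pow_dvd

theorem ABCConjecture.exists_add_le_mul_rpow (habc : ABCConjecture) {δ : ℝ} (hδ : 0 < δ) :
    ∃ C : ℝ, 0 < C ∧ ∀ d m : ℕ, 0 < d → 0 < m →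
      ((d + m : ℕ) : ℝ) ≤
        C * ((d : ℝ) * natRadical m * natRadical (d + m)) ^ (1 + δ) := by
  obtain ⟨C, hC, hbound⟩ := habc δ hδ
  refine ⟨C, hC, fun d m hd hm ↦ ?_⟩
  obtain ⟨g, a, b, hg, hab, rfl, rfl⟩ := Nat.exists_coprime' (Nat.gcd_pos_of_pos_left m hd)
  rw [← add_mul]
  have ha : 0 < a := Nat.pos_of_mul_pos_right hd
  have hb : 0 < b := Nat.pos_of_mul_pos_right hm
  have hrad : natRadical (a * b * (a + b)) ≤
      a * natRadical (b * g) * natRadical ((a + b) * g) :=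
    calc natRadical (a * b * (a + b))
        ≤ natRadical a * natRadical b * natRadical (a + b) :=
          (natRadical_mul_le _ _).trans (Nat.mul_le_mul_right _ (natRadical_mul_le _ _))
      _ ≤ a * natRadical (b * g) * natRadical ((a + b) * g) := by
          gcongr
          · exact natRadical_le_self ha
          · exact natRadical_le_of_dvd (dvd_mul_right b g) hm.ne'
          · exact natRadical_le_of_dvd (dvd_mul_right (a + b) g) (by positivity)
  have hg_le : (g : ℝ) ≤ (g : ℝ) ^ (1 + δ) :=
    Real.self_le_rpow_of_one_le (by exact_mod_cast hg) (by linarith)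
  calc (((a + b) * g : ℕ) : ℝ) = ((a + b : ℕ) : ℝ) * g := Nat.cast_mul _ _
    _ ≤ C * (natRadical (a * b * (a + b)) : ℝ) ^ (1 + δ) * (g : ℝ) ^ (1 + δ) := by
        gcongr
        exact hbound a b (a + b) ha hb (by positivity) hab rfl
    _ ≤ C * ((a * natRadical (b * g) * natRadical ((a + b) * g) : ℕ) : ℝ) ^ (1 + δ) *
          (g : ℝ) ^ (1 + δ) := by gcongr
    _ = C * (((a * g : ℕ) : ℝ) * natRadical (b * g) * natRadical ((a + b) * g)) ^ (1 + δ) := by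
        rw [mul_assoc, ← Real.mul_rpow (by positivity) (by positivity)]
        push_cast
        ring_nf

theorem rpow_le_mul_of_le_mul_rpow {N C d α δ : ℝ} (hN : 1 ≤ N) (hC : 0 ≤ C) (hd : 0 ≤ d)
    (hδ : -1 < δ) (h : N ≤ C * (d * N ^ α) ^ (1 + δ)) :
    N ^ (1 - δ - α) ≤ C ^ (1 + δ)⁻¹ * d := by
  have hN₀ : 0 < N := zero_lt_one.trans_le hN
  have hδ₁ : 0 < 1 + δ := by linarith
  have hexp : 1 - δ ≤ (1 + δ)⁻¹ := by
    rw [← one_div, le_div_iff₀ hδ₁]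
    nlinarith [sq_nonneg δ]
  have hroot : N ^ (1 + δ)⁻¹ ≤ C ^ (1 + δ)⁻¹ * (d * N ^ α) := by
    rw [Real.rpow_inv_le_iff_of_pos hN₀.le (by positivity) hδ₁,
      Real.mul_rpow (by positivity) (by positivity), Real.rpow_inv_rpow hC hδ₁.ne']
    exact h
  rw [Real.rpow_sub hN₀, div_le_iff₀ (by positivity), mul_assoc]
  exact (Real.rpow_le_rpow_of_exponent_le hN hexp).trans hroot

theorem ABCConjecture.exists_mul_rpow_le_sub (habc : ABCConjecture) {k : ℕ} (hk : k ≠ 0)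
    {ε : ℝ} (hε : 0 < ε) :
    ∃ c : ℝ, 0 < c ∧ ∀ m n : ℕ, 0 < m → m < n → IsKFull k m → IsKFull k n →
      c * (n : ℝ) ^ (1 - (2 + ε) / k) ≤ n - m := by
  have hδ : 0 < ε / k := by positivity
  obtain ⟨C, hC, hbound⟩ := habc.exists_add_le_mul_rpow hδ
  refine ⟨(C ^ (1 + ε / k)⁻¹)⁻¹, by positivity, fun m n hm hmn hm_full hn_full ↦ ?_⟩
  have hn : 0 < n := hm.trans hmn
  have hsub : 0 ≤ (n : ℝ) - m := sub_nonneg.2 (by exact_mod_cast hmn.le)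
  have hradm : (natRadical m : ℝ) ≤ (n : ℝ) ^ (k : ℝ)⁻¹ :=
    (hm_full.natRadical_le_rpow hk hm).trans (by gcongr)
  have hradn : (natRadical n : ℝ) ≤ (n : ℝ) ^ (k : ℝ)⁻¹ := hn_full.natRadical_le_rpow hk hn
  have habc_n : (n : ℝ) ≤ C * ((n - m) * (n : ℝ) ^ (2 / (k : ℝ))) ^ (1 + ε / k) :=
    calc (n : ℝ) ≤ C * (((n : ℝ) - m) * natRadical m * natRadical n) ^ (1 + ε / k) := by
          simpa only [Nat.sub_add_cancel hmn.le, Nat.cast_sub hmn.le] using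
            hbound (n - m) m (Nat.sub_pos_of_lt hmn) hm
      _ ≤ C * (((n : ℝ) - m) * (n : ℝ) ^ (k : ℝ)⁻¹ * (n : ℝ) ^ (k : ℝ)⁻¹) ^ (1 + ε / k) := by
          gcongr
      _ = C * ((n - m) * (n : ℝ) ^ (2 / (k : ℝ))) ^ (1 + ε / k) := by
          rw [mul_assoc, ← Real.rpow_add (by positivity), ← two_mul, ← div_eq_mul_inv]
  have hexp : 1 - (2 + ε) / (k : ℝ) = 1 - ε / k - 2 / k := by ring
  rw [inv_mul_le_iff₀ (by positivity), hexp]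
  exact rpow_le_mul_of_le_mul_rpow (by exact_mod_cast hn) hC.le hsub (by linarith) habc_n

theorem ncard_le_div_add_one_of_le_sub {ι : Type*} [LinearOrder ι] {s : Set ι} {f : ι → ℝ}
    {x y D : ℝ} (hy : 0 ≤ y) (hD : 0 < D) (hf : Set.MapsTo f s (Set.Icc x (x + y)))
    (hgap : ∀ a ∈ s, ∀ b ∈ s, a < b → D ≤ f b - f a) :
    (s.ncard : ℝ) ≤ y / D + 1 := by
  have hnonneg : ∀ a ∈ s, 0 ≤ (f a - x) / D := fun a ha ↦
    div_nonneg (sub_nonneg.2 (hf ha).1) hD.le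
  have hmono : StrictMonoOn (fun a ↦ ⌊(f a - x) / D⌋₊) s := fun a ha b hb hab ↦ by
    rw [← Nat.add_one_le_iff, ← Nat.floor_add_one (hnonneg a ha)]
    refine Nat.floor_le_floor ?_
    rw [div_add_one hD.ne']
    gcongr
    linarith [hgap a ha b hb hab]
  have hmaps : ∀ a ∈ s, ⌊(f a - x) / D⌋₊ ∈ (Finset.range (⌊y / D⌋₊ + 1) : Set ℕ) := fun a ha ↦ by
    rw [Finset.mem_coe, Finset.mem_range_succ_iff]
    gcongr
    linarith [(hf ha).2]
  calc (s.ncard : ℝ) ≤ (⌊y / D⌋₊ + 1 : ℕ) := by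
        rw [← Finset.card_range (⌊y / D⌋₊ + 1), ← Set.ncard_coe_finset]
        exact_mod_cast Set.ncard_le_ncard_of_injOn _ hmaps hmono.injOn
    _ ≤ y / D + 1 := by
        push_cast
        gcongr
        exact Nat.floor_le (by positivity)

theorem ABCConjecture.exists_ncard_isKFull_le (habc : ABCConjecture) {k : ℕ} {ε : ℝ}
    (hε : 0 < ε) (hεk : 2 + ε ≤ k) :
    ∃ C : ℝ, 0 < C ∧ ∀ x y : ℝ, 0 < x → 0 ≤ y →
      ({n : ℕ | x < (n : ℝ) ∧ (n : ℝ) ≤ x + y ∧ 0 < n ∧ IsKFull k n}.ncard : ℝ)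
        ≤ C * (y / x ^ (1 - (2 + ε) / k)) + 1 := by
  have hk : (0 : ℝ) < k := by linarith
  have hexp : 0 ≤ 1 - (2 + ε) / k := sub_nonneg.2 ((div_le_one hk).2 hεk)
  obtain ⟨c, hc, hgap⟩ := habc.exists_mul_rpow_le_sub (by exact_mod_cast hk.ne') hε
  refine ⟨c⁻¹, by positivity, fun x y hx hy ↦ ?_⟩
  rw [inv_mul_eq_div, div_div, mul_comm _ c]
  refine ncard_le_div_add_one_of_le_sub (f := fun n : ℕ ↦ (n : ℝ)) hy (by positivity)
    (fun n hn ↦ ⟨hn.1.le, hn.2.1⟩) ?_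
  rintro m ⟨-, -, hm, hm_full⟩ n ⟨hxn, -, -, hn_full⟩ hmn
  exact le_trans (by gcongr) (hgap m n hm hmn hm_full hn_full)

/-- Assuming the abc-conjecture, for every integer `k ≥ 3` and `ε > 0` there is a
constant `C > 0` such that for all real `x ≥ 1` and `1 ≤ y ≤ x`, the number of
`k`-full integers in `(x, x + y]` is at most `C · y^((2+ε)/k)`. -/
theorem kfull_short_interval_bound_of_abc (habc : ABCConjecture)
    (k : ℕ) (hk : 3 ≤ k) (ε : ℝ) (hε : 0 < ε) :
    ∃ C : ℝ, 0 < C ∧ ∀ x y : ℝ, 1 ≤ x → 1 ≤ y → y ≤ x →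
      (({n : ℕ | x < (n : ℝ) ∧ (n : ℝ) ≤ x + y ∧ 0 < n ∧ IsKFull k n}.ncard : ℝ))
        ≤ C * y ^ ((2 + ε) / (k : ℝ)) := by
  have hk3 : (3 : ℝ) ≤ k := by exact_mod_cast hk
  have hmin_le : min ε 1 ≤ 1 := min_le_right ε 1
  -- Shrinking `ε` to at most `1` strengthens the bound and makes the exponent at most `1`.
  obtain ⟨C, hC, hcount⟩ :=
    habc.exists_ncard_isKFull_le (k := k) (lt_min hε one_pos) (by linarith)
  set θ : ℝ := (2 + min ε 1) / k
  have hθ_nonneg : 0 ≤ θ := by positivity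
  have hθ_le_one : θ ≤ 1 := (div_le_one (by linarith)).2 (by linarith)
  have hθ_le : θ ≤ (2 + ε) / k :=
    div_le_div_of_nonneg_right (by linarith [min_le_left ε 1]) (by positivity)
  refine ⟨C + 1, by positivity, fun x y hx hy hyx ↦ ?_⟩
  have hy₀ : 0 < y := by linarith
  calc _ ≤ C * (y / x ^ (1 - θ)) + 1 := hcount x y (by linarith) hy₀.le
    _ ≤ C * (y / y ^ (1 - θ)) + y ^ θ := by
        gcongr
        exact Real.one_le_rpow hy hθ_nonneg
    _ = (C + 1) * y ^ θ := by
        rw [Real.rpow_sub hy₀, Real.rpow_one, div_div_cancel₀ hy₀.ne']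
        ring
    _ ≤ (C + 1) * y ^ ((2 + ε) / (k : ℝ)) :=
        mul_le_mul_of_nonneg_left (Real.rpow_le_rpow_of_exponent_le hy hθ_le) (by positivity)
end
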